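/- arXiv:1203.1795 — 2 statements merged into one kernel-verified Lean document; each statement's English description precedes it below -/
import Mathlib

section
/- (Exponential convergence to the stationary profile.) Let j > 0 and K ≥ 1 an integer, and let ρ*(r) = j·(1−α^K)·r + 1/2 where α ∈ (1/2,1) is the unique solution of α + j·α^K = j + 1/2. There exist constants c, c′ > 0 such that for every bounded measurable initial datum ρ₀ : [−1,1] → [0,1] and every solution ρ of the macroscopic integral equation with initial datum ρ₀ (with continuous boundary traces t ↦ ρ(±1,t)), one has sup_{r∈[−1,1]} |ρ(r,t) − ρ*(r)| ≤ c′·e^{−c·t} for all t > 0. -/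
open MeasureTheory

/-- The Gaussian heat kernel on the real line. -/
noncomputable def G (t r r' : ℝ) : ℝ :=
  Real.exp (-(r - r') ^ 2 / (2 * t)) / Real.sqrt (2 * Real.pi * t)

/-- The Neumann heat kernel on `[-1,1]`, obtained from the Gaussian kernel by
the reflection map: for `r' ∈ (-1,1)`,
`P t r r' = ∑_{n∈ℤ} [G t r (r'+4n) + G t r (2−r'+4n)]`, while at the boundary
`P t r (±1) = ∑_{n∈ℤ} 2·G t r (±1+4n)`. -/
noncomputable def P (t r r' : ℝ) : ℝ :=
  if r' = 1 ∨ r' = -1 then ∑' n : ℤ, 2 * G t r (r' + 4 * n)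
  else ∑' n : ℤ, (G t r (r' + 4 * n) + G t r (2 - r' + 4 * n))


/-- `ρ : [−1,1] × [0,∞) → [0,1]` (encoded as `ρ : ℝ → ℝ → ℝ`, first argument the
space variable) is a bounded measurable solution of the macroscopic integral
equation with initial datum `ρ₀ : [−1,1] → [0,1]`: it takes values in `[0,1]`,
agrees with `ρ₀` at time `0`, and for all `t > 0`, `r ∈ [−1,1]`,
`ρ(r,t) = ∫_{−1}^{1} P_t(r,r')ρ₀(r')dr'
  + (j/2)∫_0^t [P_s(r,1)(1 − ρ(1,t−s)^K) − P_s(r,−1)(1 − (1 − ρ(−1,t−s))^K)] ds`. -/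
def IsMacroSolution (j : ℝ) (K : ℕ) (ρ₀ : ℝ → ℝ) (ρ : ℝ → ℝ → ℝ) : Prop :=
  Measurable (Function.uncurry ρ) ∧
  (∀ r ∈ Set.Icc (-1 : ℝ) 1, ∀ t : ℝ, 0 ≤ t → ρ r t ∈ Set.Icc (0 : ℝ) 1) ∧
  (∀ r ∈ Set.Icc (-1 : ℝ) 1, ρ r 0 = ρ₀ r) ∧
  (∀ t : ℝ, 0 < t → ∀ r ∈ Set.Icc (-1 : ℝ) 1,
    ρ r t = (∫ r' in (-1 : ℝ)..1, P t r r' * ρ₀ r')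
      + j / 2 * ∫ s in (0 : ℝ)..t,
          (P s r 1 * (1 - (ρ 1 (t - s)) ^ K)
            - P s r (-1) * (1 - (1 - ρ (-1) (t - s)) ^ K)))

/-- decay rates -/
noncomputable def mu (k : ℤ) : ℝ := Real.pi ^ 2 * (k : ℝ) ^ 2 / 8

/-- Neumann eigenfunctions -/
noncomputable def phi (k : ℤ) (r : ℝ) : ℝ := Real.cos (k * Real.pi * (r - 1) / 2)

lemma sq_le_mu (k : ℤ) : (k : ℝ) ^ 2 ≤ mu k := by
  unfold mu
  have := Real.pi_gt_three
  have h : (8 : ℝ) ≤ Real.pi ^ 2 := by nlinarith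
  have := mul_le_mul_of_nonneg_right h (sq_nonneg (k : ℝ))
  linarith

lemma abs_phi_le (k : ℤ) (r : ℝ) : |phi k r| ≤ 1 := Real.abs_cos_le_one _

lemma phi_one (k : ℤ) : phi k 1 = 1 := by simp [phi]

lemma summable_w : Summable fun k : ℤ => 1 / (1 + (k : ℝ) ^ 2) := by
  have h : Summable fun k : ℤ => |(k : ℝ)| ^ (-2 : ℝ) := Real.summable_abs_int_rpow (by norm_num)
  refine Summable.of_norm_bounded_eventually h ?_
  have : ∀ᶠ k : ℤ in Filter.cofinite, k ≠ 0 := Filter.eventually_cofinite_ne 0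
  filter_upwards [this] with k hk
  have hk' : (0 : ℝ) < |(k : ℝ)| := by positivity
  rw [Real.rpow_neg hk'.le, Real.norm_of_nonneg (by positivity), one_div]
  apply inv_anti₀ (by positivity)
  rw [Real.rpow_two, sq_abs]; linarith

lemma summable_w34 : Summable fun k : ℤ => (1 / (1 + (k : ℝ) ^ 2)) ^ (3 / 4 : ℝ) := by
  have h : Summable fun k : ℤ => |(k : ℝ)| ^ (-(3 / 2) : ℝ) := Real.summable_abs_int_rpow (by norm_num)
  refine Summable.of_norm_bounded_eventually h ?_
  have : ∀ᶠ k : ℤ in Filter.cofinite, k ≠ 0 := Filter.eventually_cofinite_ne 0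
  filter_upwards [this] with k hk
  have hk' : (0 : ℝ) < |(k : ℝ)| := by positivity
  rw [Real.norm_of_nonneg (by positivity)]
  have : |(k : ℝ)| ^ (-(3 / 2) : ℝ) = (1 / |(k : ℝ)| ^ (2 : ℝ)) ^ (3 / 4 : ℝ) := by
    rw [one_div, ← Real.rpow_neg hk'.le, ← Real.rpow_mul hk'.le]; norm_num
  rw [this]
  apply Real.rpow_le_rpow (by positivity) _ (by norm_num)
  apply one_div_le_one_div_of_le (by positivity)
  rw [Real.rpow_two, sq_abs]; linarith

lemma exp_mu_le (k : ℤ) {s t : ℝ} (hs : 0 < s) (hst : s ≤ t) :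
    Real.exp (-(mu k * t)) ≤ (1 + 1 / s) * (1 / (1 + (k : ℝ) ^ 2)) := by
  have h0 := sq_le_mu k
  have h1 : (k : ℝ) ^ 2 * s ≤ mu k * t := by
    apply mul_le_mul h0 hst hs.le ((sq_nonneg _).trans h0)
  have h2 : 1 + (k : ℝ) ^ 2 * s ≤ Real.exp (mu k * t) := by
    have := Real.add_one_le_exp (mu k * t); linarith
  have h3 : (0 : ℝ) < 1 + (k : ℝ) ^ 2 * s := by positivity
  rw [Real.exp_neg]
  calc _ ≤ (1 + (k : ℝ) ^ 2 * s)⁻¹ := inv_anti₀ h3 h2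
    _ ≤ _ := by
      rw [inv_eq_one_div, mul_one_div, div_le_div_iff₀ h3 (by positivity)]
      have : (1 + 1 / s) * (1 + (k : ℝ) ^ 2 * s) = 1 + (k : ℝ) ^ 2 + 1 / s + k ^ 2 * s := by
        field_simp; ring
      rw [this]
      have : 0 ≤ 1 / s + k ^ 2 * s := by positivity
      linarith

lemma summable_exp_mu {s : ℝ} (hs : 0 < s) : Summable fun k : ℤ => Real.exp (-(mu k * s)) :=
  Summable.of_nonneg_of_le (fun _ => (Real.exp_pos _).le) (fun k => exp_mu_le k hs le_rfl)
    (summable_w.mul_left _)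

lemma hasSum_congr_aux {ι : Type} {f g : ι → ℝ} {a : ℝ} (h : ∀ k, f k = g k) (hg : HasSum g a) :
    HasSum f a := by
  rw [funext h]; exact hg

lemma gauss_summable {s : ℝ} (hs : 0 < s) (r y : ℝ) :
    Summable (fun n : ℤ => G s r (y + 4 * n)) := by
  have hσ : 0 < 32 / (Real.pi ^ 2 * s) := by positivity
  have h := (summable_exp_mu hσ).mul_left
    (Real.exp ((r - y) ^ 2 / (2 * s)) / Real.sqrt (2 * Real.pi * s))
  refine Summable.of_nonneg_of_le (fun n => ?_) (fun n => ?_) h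
  · unfold G; positivity
  · unfold G
    rw [div_mul_eq_mul_div, ← Real.exp_add]
    gcongr
    have : mu n * (32 / (Real.pi ^ 2 * s)) = 8 * (n : ℝ) ^ 2 / (2 * s) := by
      unfold mu; field_simp; ring
    rw [this, ← sub_eq_add_neg, ← sub_div]
    gcongr
    nlinarith [sq_nonneg (r - y - 2 * n)]

/-- Poisson summation for the Gaussian kernel -/
lemma gauss_hasSum {s : ℝ} (hs : 0 < s) (r y : ℝ) :
    HasSum (fun k : ℤ => (1 / 4) * (Real.exp (-(mu k * s)) *
      Real.cos (k * Real.pi * (r - y) / 2))) (∑' n : ℤ, G s r (y + 4 * n)) := by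
  have ha0 : 0 < Real.pi * s / 8 := by positivity
  have ha : 0 < ((Real.pi * s / 8 : ℝ) : ℂ).re := by
    rw [Complex.ofReal_re]; positivity
  have key := Complex.tsum_exp_neg_quadratic ha (Complex.I * ((r - y) / 4 : ℝ))
  have hL : ∀ k : ℤ, Complex.exp (-Real.pi * ((Real.pi * s / 8 : ℝ) : ℂ) * k ^ 2 +
      2 * Real.pi * (Complex.I * ((r - y) / 4 : ℝ)) * k) =
      (Real.exp (-(mu k * s)) : ℂ) *
        Complex.exp ((k * Real.pi * (r - y) / 2 : ℝ) * Complex.I) := by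
    intro k
    rw [Complex.ofReal_exp, ← Complex.exp_add]
    congr 1
    unfold mu
    push_cast
    ring
  have hR : ∀ n : ℤ, Complex.exp (-Real.pi / ((Real.pi * s / 8 : ℝ) : ℂ) *
      (n + Complex.I * (Complex.I * ((r - y) / 4 : ℝ))) ^ 2) =
      ((Real.sqrt (2 * Real.pi * s) * G s r (y + 4 * n) : ℝ) : ℂ) := by
    intro n
    have h1 : Real.sqrt (2 * Real.pi * s) * G s r (y + 4 * n) =
        Real.exp (-(r - (y + 4 * n)) ^ 2 / (2 * s)) := by
      unfold G
      have : 0 < Real.sqrt (2 * Real.pi * s) := by positivity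
      field_simp
    rw [h1, Complex.ofReal_exp, ← mul_assoc, Complex.I_mul_I]
    congr 1
    push_cast
    have : (s : ℂ) ≠ 0 := by exact_mod_cast hs.ne'
    have : (Real.pi : ℂ) ≠ 0 := by exact_mod_cast Real.pi_ne_zero
    field_simp
    ring
  have hroot : (1 : ℂ) / ((Real.pi * s / 8 : ℝ) : ℂ) ^ (1 / 2 : ℂ) =
      ((1 / Real.sqrt (Real.pi * s / 8) : ℝ) : ℂ) := by
    rw [Real.sqrt_eq_rpow, Complex.ofReal_div _ ((Real.pi * s / 8) ^ (1 / 2 : ℝ)),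
      Complex.ofReal_cpow ha0.le]
    norm_num
  rw [tsum_congr hL, tsum_congr hR, hroot, ← Complex.ofReal_tsum, ← Complex.ofReal_mul] at key
  have hsum : Summable fun k : ℤ => (Real.exp (-(mu k * s)) : ℂ) *
        Complex.exp ((k * Real.pi * (r - y) / 2 : ℝ) * Complex.I) := by
    refine Summable.of_norm ?_
    refine (summable_exp_mu hs).congr fun k => ?_
    rw [norm_mul, Complex.norm_exp_ofReal_mul_I, mul_one, Complex.norm_real,
      Real.norm_of_nonneg (Real.exp_pos _).le]
  have h := hsum.hasSum
  rw [key] at h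
  have h2 := Complex.hasSum_re h
  rw [Complex.ofReal_re, tsum_mul_left] at h2
  have h3 := h2.mul_left (1 / 4)
  have hc : (1 / 4) * (1 / Real.sqrt (Real.pi * s / 8) * (Real.sqrt (2 * Real.pi * s) *
      ∑' n : ℤ, G s r (y + 4 * n))) = ∑' n : ℤ, G s r (y + 4 * n) := by
    have : Real.sqrt (2 * Real.pi * s) = 4 * Real.sqrt (Real.pi * s / 8) := by
      rw [show 2 * Real.pi * s = 4 ^ 2 * (Real.pi * s / 8) by ring,
        Real.sqrt_mul (by norm_num), Real.sqrt_sq (by norm_num)]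
    rw [this]
    have : 0 < Real.sqrt (Real.pi * s / 8) := by positivity
    field_simp
  rw [hc] at h3
  refine hasSum_congr_aux (fun k => ?_) h3
  rw [Complex.re_ofReal_mul, Complex.exp_ofReal_mul_I_re]

lemma P_hasSum {s : ℝ} (hs : 0 < s) (r r' : ℝ) :
    HasSum (fun k : ℤ => (1 / 2) * (Real.exp (-(mu k * s)) * (phi k r * phi k r'))) (P s r r') := by
  unfold P
  split_ifs with h
  · have h1 := (gauss_hasSum hs r r').mul_left 2
    rw [← tsum_mul_left] at h1
    refine hasSum_congr_aux (fun k => ?_) h1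
    have : phi k r * phi k r' = Real.cos (k * Real.pi * (r - r') / 2) := by
      unfold phi
      rcases h with rfl | rfl
      · simp
      · rw [show (k : ℝ) * Real.pi * (-1 - 1) / 2 = -(k * Real.pi) by ring, Real.cos_neg,
          show (k : ℝ) * Real.pi * (r - -1) / 2 = k * Real.pi * (r - 1) / 2 + k * Real.pi by ring,
          Real.cos_add, Real.sin_int_mul_pi]
        ring
    rw [this]; ring
  · have h1 := (gauss_hasSum hs r r').add (gauss_hasSum hs r (2 - r'))
    rw [← (gauss_summable hs r r').tsum_add (gauss_summable hs r (2 - r'))] at h1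
    refine hasSum_congr_aux (fun k => ?_) h1
    have : 2 * (phi k r * phi k r') = Real.cos (k * Real.pi * (r - r') / 2) +
        Real.cos (k * Real.pi * (r - (2 - r')) / 2) := by
      unfold phi
      rw [show (k : ℝ) * Real.pi * (r - r') / 2 =
          k * Real.pi * (r - 1) / 2 - k * Real.pi * (r' - 1) / 2 by ring,
        show (k : ℝ) * Real.pi * (r - (2 - r')) / 2 =
          k * Real.pi * (r - 1) / 2 + k * Real.pi * (r' - 1) / 2 by ring,
        Real.cos_add, Real.cos_sub]
      ring
    linear_combination (1 / 4) * Real.exp (-(mu k * s)) * this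

lemma bern_cos {z : ℝ} (hz : z ∈ Set.Icc (0 : ℝ) 1) :
    HasSum (fun k : ℤ => 1 / (k : ℝ) ^ 2 * Real.cos (2 * Real.pi * k * z))
      (2 * Real.pi ^ 2 * (z ^ 2 - z + 1 / 6)) := by
  have h := hasSum_one_div_nat_pow_mul_cos (k := 1) one_ne_zero hz
  have he : (Polynomial.map (algebraMap ℚ ℝ) (Polynomial.bernoulli (2 * 1))).eval z =
      z ^ 2 - z + 1 / 6 := by
    simp [Polynomial.bernoulli, Finset.sum_range_succ, Polynomial.eval_monomial, bernoulli_one]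
    ring
  rw [he] at h
  have hval : (-1 : ℝ) ^ (1 + 1) * (2 * Real.pi) ^ (2 * 1) / 2 / ((2 * 1).factorial : ℝ) *
      (z ^ 2 - z + 1 / 6) = Real.pi ^ 2 * (z ^ 2 - z + 1 / 6) := by
    simp only [Nat.factorial]; push_cast; ring
  rw [hval] at h
  have h2 := HasSum.of_nat_of_neg
    (f := fun k : ℤ => 1 / (k : ℝ) ^ 2 * Real.cos (2 * Real.pi * k * z))
    (hasSum_congr_aux (fun n => by simp) h)
    (hasSum_congr_aux (fun n => by simp) h)
  have hval2 : Real.pi ^ 2 * (z ^ 2 - z + 1 / 6) + Real.pi ^ 2 * (z ^ 2 - z + 1 / 6) -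
      1 / ((0 : ℤ) : ℝ) ^ 2 * Real.cos (2 * Real.pi * ((0 : ℤ) : ℝ) * z) =
      2 * Real.pi ^ 2 * (z ^ 2 - z + 1 / 6) := by
    simp; ring
  rw [hval2] at h2
  exact h2

/-- Cosine coefficients of the stationary profile -/
noncomputable def cst (β : ℝ) (k : ℤ) : ℝ :=
  (if k = 0 then 1 else 0) + β / 2 * (1 - phi k (-1)) / mu k

lemma phi_mul_neg_one (k : ℤ) (r : ℝ) :
    phi k r * phi k (-1) = Real.cos (k * Real.pi * (r + 1) / 2) := by
  unfold phi
  rw [show (k : ℝ) * Real.pi * (-1 - 1) / 2 = -(k * Real.pi) by ring, Real.cos_neg,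
          show (k : ℝ) * Real.pi * (r + 1) / 2 = k * Real.pi * (r - 1) / 2 + k * Real.pi by ring,
          Real.cos_add, Real.sin_int_mul_pi]
  ring

lemma cst_hasSum (β : ℝ) {r : ℝ} (hr : r ∈ Set.Icc (-1 : ℝ) 1) :
    HasSum (fun k : ℤ => (1 / 2) * (phi k r * cst β k)) (β * r + 1 / 2) := by
  have h1 := bern_cos (z := (1 - r) / 4) ⟨by linarith [hr.2], by linarith [hr.1]⟩
  have h2 := bern_cos (z := (1 + r) / 4) ⟨by linarith [hr.1], by linarith [hr.2]⟩
  have h3 := ((h1.sub h2).mul_left (2 * β / Real.pi ^ 2)).add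
    (hasSum_ite_eq (0 : ℤ) (1 / 2 : ℝ))
  have hpi := Real.pi_ne_zero
  have hv : 2 * β / Real.pi ^ 2 * (2 * Real.pi ^ 2 * (((1 - r) / 4) ^ 2 - (1 - r) / 4 + 1 / 6) -
      2 * Real.pi ^ 2 * (((1 + r) / 4) ^ 2 - (1 + r) / 4 + 1 / 6)) + 1 / 2 = β * r + 1 / 2 := by
    field_simp; ring
  rw [hv] at h3
  refine hasSum_congr_aux (fun k => ?_) h3
  by_cases hk : k = 0
  · subst hk; simp [cst, phi]
  · have hk' : (k : ℝ) ≠ 0 := by exact_mod_cast hk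
    have e1 : Real.cos (2 * Real.pi * k * ((1 - r) / 4)) = phi k r := by
      unfold phi; rw [← Real.cos_neg]; congr 1; ring
    have e2 : Real.cos (2 * Real.pi * k * ((1 + r) / 4)) = phi k r * phi k (-1) := by
      rw [phi_mul_neg_one]; congr 1; ring
    rw [e1, e2]
    simp only [cst, hk, if_false, mu]
    field_simp
    ring

lemma summable_inv_sq_int : Summable fun k : ℤ => ((k : ℝ)⁻¹) ^ 2 := by
  have h : Summable fun k : ℤ => |(k : ℝ)| ^ (-2 : ℝ) := Real.summable_abs_int_rpow (by norm_num)
  refine h.congr fun k => ?_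
  rw [Real.rpow_neg (abs_nonneg _), Real.rpow_two, sq_abs, inv_pow]

/-- Poincare type inequality at the level of coefficients -/
lemma poincare (c : ℤ → ℝ) (x : ℝ) (hc : HasSum c (2 * x))
    (hc2 : Summable fun k => c k ^ 2) (hD : Summable fun k : ℤ => (k : ℝ) ^ 2 * c k ^ 2) :
    ∑' k, c k ^ 2 ≤ 8 * x ^ 2 +
      (2 * (∑' k : ℤ, ((k : ℝ)⁻¹) ^ 2) + 1) * ∑' k : ℤ, (k : ℝ) ^ 2 * c k ^ 2 := by
  set S := ∑' k : ℤ, ((k : ℝ)⁻¹) ^ 2 with hS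
  set D := ∑' k : ℤ, (k : ℝ) ^ 2 * c k ^ 2 with hDdef
  have hSpos : 0 < S := by
    have := summable_inv_sq_int.sum_le_tsum {(1 : ℤ)} (fun _ _ => by positivity)
    simp at this
    rw [hS]
    simp only [inv_pow]
    linarith
  -- the sum without the zero mode
  have hT : HasSum (fun k : ℤ => if k = 0 then 0 else c k) (2 * x - c 0) := by
    have := hc.sub (hasSum_ite_eq (0 : ℤ) (c 0))
    refine hasSum_congr_aux (fun k => ?_) this
    by_cases hk : k = 0 <;> simp [hk]
  have hT2 : HasSum (fun k : ℤ => if k = 0 then 0 else c k ^ 2) (∑' k, c k ^ 2 - c 0 ^ 2) := by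
    have := hc2.hasSum.sub (hasSum_ite_eq (0 : ℤ) (c 0 ^ 2))
    refine hasSum_congr_aux (fun k => ?_) this
    by_cases hk : k = 0 <;> simp [hk]
  have h1 : ∑' k, c k ^ 2 - c 0 ^ 2 ≤ D := by
    refine hasSum_le (fun k => ?_) hT2 hD.hasSum
    by_cases hk : k = 0
    · simp [hk]
    · simp only [hk, if_false]
      have h1k : (1 : ℝ) ≤ (k : ℝ) ^ 2 := by
        have : 1 ≤ k ^ 2 := by have := sq_nonneg k; have := pow_ne_zero 2 hk; omega
        exact_mod_cast this
      nlinarith [sq_nonneg (c k)]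
  set T := 2 * x - c 0 with hTdef
  have h2 : T ^ 2 ≤ S * D := by
    have hs := (hD.hasSum.sub (hT.mul_left (2 * (T / S)))).add
      (summable_inv_sq_int.hasSum.mul_left ((T / S) ^ 2))
    have hnn := hasSum_le (f := fun _ : ℤ => (0 : ℝ)) (fun k => ?_) hasSum_zero hs
    · have e : D - 2 * (T / S) * T + (T / S) ^ 2 * S = D - T ^ 2 / S := by
        field_simp; ring
      rw [← hDdef, ← hS, e] at hnn
      have : T ^ 2 / S ≤ D := by linarith
      rw [div_le_iff₀ hSpos] at this
      linarith
    · by_cases hk : k = 0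
      · simp [hk]
      · have hk' : (k : ℝ) ≠ 0 := by exact_mod_cast hk
        simp only [hk, if_false]
        have : (k : ℝ) ^ 2 * c k ^ 2 - 2 * (T / S) * c k + (T / S) ^ 2 * ((k : ℝ)⁻¹) ^ 2 =
            (k * c k - (T / S) * (k : ℝ)⁻¹) ^ 2 := by
          field_simp
          ring
        rw [this]; positivity
  have h3 : c 0 = 2 * x - T := by rw [hTdef]; ring
  have h4 : c 0 ^ 2 ≤ 8 * x ^ 2 + 2 * T ^ 2 := by
    rw [h3]; nlinarith [sq_nonneg (2 * x + T)]
  nlinarith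

lemma decay_core (B M lam : ℝ) (hB : 0 < B) (hM : 0 ≤ M) (hlam : 0 < lam) :
    ∃ γ : ℝ, 0 < γ ∧ ∃ C : ℝ, 0 < C ∧
      ∀ (c : ℤ → ℝ → ℝ) (g1 g2 x y : ℝ → ℝ) (e : ℤ → ℝ), (∀ k, |e k| ≤ 1) →
        (∀ t, 1 < t → |g1 t| ≤ M) → (∀ t, 1 < t → |g2 t| ≤ M) →
        (∀ k t, 1 < t → HasDerivAt (c k) (-(mu k * c k t) - g1 t - e k * g2 t) t) →
        (∀ k t, 1 < t → |c k t| ≤ B * (1 / (1 + (k : ℝ) ^ 2))) →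
        (∀ t, 1 < t → HasSum (fun k => c k t) (2 * x t)) →
        (∀ t, 1 < t → HasSum (fun k => e k * c k t) (2 * y t)) →
        (∀ t, 1 < t → lam * x t ^ 2 ≤ g1 t * x t) →
        (∀ t, 1 < t → 0 ≤ g2 t * y t) →
        ∀ t, 2 ≤ t → ∑' k, |c k t| ≤ C * Real.exp (-γ * t) := by
  set S := ∑' k : ℤ, ((k : ℝ)⁻¹) ^ 2 with hS
  set W := ∑' k : ℤ, 1 / (1 + (k : ℝ) ^ 2) with hW
  set V := ∑' k : ℤ, (1 / (1 + (k : ℝ) ^ 2)) ^ (3 / 4 : ℝ) with hV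
  have hS0 : 0 ≤ S := tsum_nonneg fun k => by positivity
  have hW0 : 0 ≤ W := tsum_nonneg fun k => by positivity
  have hV0 : 0 ≤ V := tsum_nonneg fun k => by positivity
  set γ := min (lam / 4) (1 / (2 * S + 1)) with hγ
  have hγ0 : 0 < γ := lt_min (by positivity) (by positivity)
  have hγ1 : γ ≤ lam / 4 := min_le_left _ _
  have hγ2 : γ * (2 * S + 1) ≤ 1 := by
    rw [← le_div_iff₀ (by positivity)]; exact min_le_right _ _
  refine ⟨γ / 4, by positivity,
    (B ^ 2 * W * Real.exp (4 * γ)) ^ (1 / 8 : ℝ) * B ^ (3 / 4 : ℝ) * V + 1, by positivity, ?_⟩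
  intro c g1 g2 x y e he hg1 hg2 hder hbd hx hy hgx hgy
  have hw1 : ∀ k : ℤ, 1 / (1 + (k : ℝ) ^ 2) ≤ 1 := fun k => by
    rw [div_le_one (by positivity)]; nlinarith [sq_nonneg (k : ℝ)]
  have hbd1 : ∀ k t, 1 < t → |c k t| ≤ B := fun k t ht =>
    (hbd k t ht).trans (by nlinarith [hw1 k])
  have hmuc : ∀ k t, 1 < t → mu k * |c k t| ≤ 2 * B := by
    intro k t ht
    have hmu : mu k ≤ 2 * (1 + (k : ℝ) ^ 2) := by
      unfold mu
      have := Real.pi_lt_d2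
      have h0 := Real.pi_pos
      have : Real.pi ^ 2 ≤ 16 := by nlinarith
      nlinarith [sq_nonneg (k : ℝ)]
    have hmu0 : 0 ≤ mu k := (sq_nonneg _).trans (sq_le_mu k)
    calc mu k * |c k t| ≤ (2 * (1 + (k : ℝ) ^ 2)) * (B * (1 / (1 + (k : ℝ) ^ 2))) :=
          mul_le_mul hmu (hbd k t ht) (abs_nonneg _) (by positivity)
      _ = 2 * B := by field_simp
  have hc2bd : ∀ k t, 1 < t → c k t ^ 2 ≤ B ^ 2 * (1 / (1 + (k : ℝ) ^ 2)) := by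
    intro k t ht
    rw [← sq_abs, sq, sq, mul_assoc]
    exact mul_le_mul (hbd1 k t ht) (hbd k t ht) (abs_nonneg _) hB.le
  have hc2 : ∀ t, 1 < t → Summable fun k => c k t ^ 2 := fun t ht =>
    Summable.of_nonneg_of_le (fun _ => sq_nonneg _) (fun k => hc2bd k t ht)
      (summable_w.mul_left _)
  have hmu2 : ∀ t, 1 < t → Summable fun k => mu k * c k t ^ 2 := by
    intro t ht
    refine Summable.of_nonneg_of_le
      (fun k => mul_nonneg ((sq_nonneg _).trans (sq_le_mu k)) (sq_nonneg _)) (fun k => ?_)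
      (summable_w.mul_left (2 * B * B))
    rw [← sq_abs, sq, ← mul_assoc, mul_assoc (2 * B)]
    exact mul_le_mul (hmuc k t ht) (hbd k t ht) (abs_nonneg _) (by positivity)
  have hD : ∀ t, 1 < t → Summable fun k : ℤ => (k : ℝ) ^ 2 * c k t ^ 2 := by
    intro t ht
    exact Summable.of_nonneg_of_le (fun k => by positivity)
      (fun k => mul_le_mul_of_nonneg_right (sq_le_mu k) (sq_nonneg _)) (hmu2 t ht)
  set E : ℝ → ℝ := fun t => ∑' k, c k t ^ 2 with hE
  have hEder : ∀ t, 1 < t → HasDerivAt E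
      (∑' k, 2 * c k t * (-(mu k * c k t) - g1 t - e k * g2 t)) t := by
    intro t ht
    refine hasDerivAt_tsum_of_isPreconnected
      (u := fun k : ℤ => 2 * (2 * B + M + M) * (B * (1 / (1 + (k : ℝ) ^ 2))))
      (t := Set.Ioi 1) (y₀ := t) (g := fun k t => c k t ^ 2)
      (g' := fun k t => 2 * c k t * (-(mu k * c k t) - g1 t - e k * g2 t))
      ((summable_w.mul_left B).mul_left _) isOpen_Ioi
      isPreconnected_Ioi (fun k s hs => ?_) (fun k s hs => ?_) ht (hc2 t ht) ht
    · have := (hder k s hs).pow 2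
      simp only [Nat.cast_ofNat, Nat.add_one_sub_one, pow_one] at this
      exact this
    · have hmu0 : 0 ≤ mu k := (sq_nonneg _).trans (sq_le_mu k)
      have h1 : |(-(mu k * c k s) - g1 s - e k * g2 s)| ≤ 2 * B + M + M := by
        refine (abs_sub _ _).trans (add_le_add ((abs_sub _ _).trans (add_le_add ?_ (hg1 s hs))) ?_)
        · rw [abs_neg, abs_mul, abs_of_nonneg hmu0]; exact hmuc k s hs
        · rw [abs_mul]
          have := mul_le_mul (he k) (hg2 s hs) (abs_nonneg _) zero_le_one
          linarith
      rw [Real.norm_eq_abs, abs_mul, abs_mul, abs_two]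
      have := mul_le_mul (hbd k s hs) h1 (abs_nonneg _) (by positivity)
      nlinarith
  have hEineq : ∀ t, 1 < t →
      (∑' k, 2 * c k t * (-(mu k * c k t) - g1 t - e k * g2 t)) ≤ -(2 * γ) * E t := by
    intro t ht
    have hs := (((hmu2 t ht).hasSum.mul_left (-2)).add ((hx t ht).mul_left (-2 * g1 t))).add
      ((hy t ht).mul_left (-2 * g2 t))
    have hs' : HasSum (fun k => 2 * c k t * (-(mu k * c k t) - g1 t - e k * g2 t)) _ :=
      hasSum_congr_aux (fun k => by ring) hs
    rw [hs'.tsum_eq]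
    have hDle : ∑' k : ℤ, (k : ℝ) ^ 2 * c k t ^ 2 ≤ ∑' k, mu k * c k t ^ 2 :=
      (hD t ht).tsum_le_tsum
        (fun k => mul_le_mul_of_nonneg_right (sq_le_mu k) (sq_nonneg _)) (hmu2 t ht)
    have hp := poincare (fun k => c k t) (x t) (hx t ht) (hc2 t ht) (hD t ht)
    have hD0 : 0 ≤ ∑' k : ℤ, (k : ℝ) ^ 2 * c k t ^ 2 := tsum_nonneg fun k => by positivity
    rw [← hS] at hp
    have hgx' := hgx t ht
    have hgy' := hgy t ht
    change E t ≤ _ at hp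
    set D := ∑' k : ℤ, (k : ℝ) ^ 2 * c k t ^ 2
    have a1 : γ * E t ≤ γ * (8 * x t ^ 2 + (2 * S + 1) * D) := by gcongr
    have a2 : γ * (2 * S + 1) * D ≤ 1 * D := by gcongr
    have a3 : γ * x t ^ 2 ≤ lam / 4 * x t ^ 2 := by gcongr
    nlinarith
  have hanti : AntitoneOn (fun t => Real.exp (2 * γ * t) * E t) (Set.Ioi 1) := by
    have hd : ∀ t, 1 < t → HasDerivAt (fun t => Real.exp (2 * γ * t) * E t)
        (Real.exp (2 * γ * t) * (2 * γ * 1) * E t + Real.exp (2 * γ * t) *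
          (∑' k, 2 * c k t * (-(mu k * c k t) - g1 t - e k * g2 t))) t := fun t ht =>
      (((hasDerivAt_id t).const_mul (2 * γ)).exp).mul (hEder t ht)
    refine antitoneOn_of_deriv_nonpos (convex_Ioi 1)
      (fun t ht => (hd t ht).continuousAt.continuousWithinAt) ?_ ?_
    · rw [interior_Ioi]
      exact fun t ht => (hd t ht).differentiableAt.differentiableWithinAt
    · rw [interior_Ioi]
      intro t ht
      rw [(hd t ht).deriv]
      have := mul_le_mul_of_nonneg_left (hEineq t ht) (Real.exp_pos (2 * γ * t)).le
      nlinarith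
  intro t ht
  have ht1 : 1 < t := by linarith
  have hE2 : E 2 ≤ B ^ 2 * W := by
    rw [hW, ← tsum_mul_left]
    exact (hc2 2 (by norm_num)).tsum_le_tsum (fun k => hc2bd k 2 (by norm_num))
      (summable_w.mul_left _)
  have hEt : E t ≤ B ^ 2 * W * Real.exp (4 * γ) * Real.exp (-(2 * γ * t)) := by
    have h := hanti (Set.mem_Ioi.mpr (by norm_num : (1 : ℝ) < 2)) (Set.mem_Ioi.mpr ht1) ht
    simp only at h
    rw [Real.exp_neg, ← div_eq_mul_inv, le_div_iff₀ (Real.exp_pos _)]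
    rw [show 2 * γ * 2 = 4 * γ by ring] at h
    have := mul_le_mul_of_nonneg_left hE2 (Real.exp_pos (4 * γ)).le
    linarith
  set A := B ^ 2 * W * Real.exp (4 * γ) with hA
  have hA0 : 0 ≤ A := by positivity
  have hck : ∀ k, |c k t| ≤ (A ^ (1 / 8 : ℝ) * B ^ (3 / 4 : ℝ)) * Real.exp (-(γ / 4) * t) *
      (1 / (1 + (k : ℝ) ^ 2)) ^ (3 / 4 : ℝ) := by
    intro k
    have h1 : |c k t| ^ 2 ≤ A * Real.exp (-(2 * γ * t)) := by
      rw [sq_abs]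
      refine le_trans ?_ hEt
      exact (hc2 t ht1).le_tsum k (fun _ _ => sq_nonneg _)
    have h2 : |c k t| = (|c k t| ^ 2) ^ (1 / 8 : ℝ) * |c k t| ^ (3 / 4 : ℝ) := by
      rw [← Real.rpow_natCast, ← Real.rpow_mul (abs_nonneg _),
        ← Real.rpow_add_of_nonneg (abs_nonneg _) (by norm_num) (by norm_num)]
      norm_num
    rw [h2]
    calc _ ≤ (A * Real.exp (-(2 * γ * t))) ^ (1 / 8 : ℝ) *
          (B * (1 / (1 + (k : ℝ) ^ 2))) ^ (3 / 4 : ℝ) := by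
          apply mul_le_mul
          · exact Real.rpow_le_rpow (by positivity) h1 (by norm_num)
          · exact Real.rpow_le_rpow (by positivity) (hbd k t ht1) (by norm_num)
          · positivity
          · positivity
      _ = _ := by
          rw [Real.mul_rpow hA0 (Real.exp_pos _).le, Real.mul_rpow hB.le (by positivity),
            ← Real.exp_mul, show -(2 * γ * t) * (1 / 8) = -(γ / 4) * t by ring]
          ring
  have hsum2 := summable_w34.mul_left
    ((A ^ (1 / 8 : ℝ) * B ^ (3 / 4 : ℝ)) * Real.exp (-(γ / 4) * t))
  calc ∑' k, |c k t| ≤ ∑' k : ℤ, (A ^ (1 / 8 : ℝ) * B ^ (3 / 4 : ℝ)) * Real.exp (-(γ / 4) * t) *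
      (1 / (1 + (k : ℝ) ^ 2)) ^ (3 / 4 : ℝ) :=
        (Summable.of_nonneg_of_le (fun _ => abs_nonneg _) hck hsum2).tsum_le_tsum hck hsum2
    _ = (A ^ (1 / 8 : ℝ) * B ^ (3 / 4 : ℝ) * V) * Real.exp (-(γ / 4) * t) := by
        rw [tsum_mul_left]; ring
    _ ≤ _ := by
        gcongr
        linarith

lemma integral_exp_mu_aux (k : ℤ) (hmu0 : 0 < mu k) (t : ℝ) :
    ∫ s in (0 : ℝ)..t, Real.exp (-(mu k * s)) = (1 - Real.exp (-(mu k * t))) / mu k := by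
  have hd : ∀ s ∈ Set.uIcc 0 t, HasDerivAt (fun s => -Real.exp (-(mu k * s)) / mu k)
      (Real.exp (-(mu k * s))) s := by
    intro s _
    have h2 : HasDerivAt (fun t => Real.exp (-(mu k * t)))
      (Real.exp (-(mu k * s)) * -(mu k * 1)) s :=
      ((hasDerivAt_id s).const_mul (mu k)).neg.exp
    refine (h2.neg.div_const (mu k)).congr_deriv ?_
    field_simp
  rw [intervalIntegral.integral_eq_sub_of_hasDerivAt hd
    (by apply Continuous.intervalIntegrable; fun_prop)]
  simp
  ring

lemma integral_exp_mu_le (k : ℤ) {t : ℝ} (ht : 0 ≤ t) :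
    ∫ s in (0 : ℝ)..t, Real.exp (-(mu k * s)) ≤ (2 + t) * (1 / (1 + (k : ℝ) ^ 2)) := by
  by_cases hk : k = 0
  · subst hk; simp [mu]
  · have hk' : (k : ℝ) ≠ 0 := by exact_mod_cast hk
    have h1k : (1 : ℝ) ≤ (k : ℝ) ^ 2 := by
      have : 1 ≤ k ^ 2 := by have := sq_nonneg k; have := pow_ne_zero 2 hk; omega
      exact_mod_cast this
    have hmu := sq_le_mu k
    have hmu0 : 0 < mu k := by linarith
    have h := integral_exp_mu_aux k hmu0 t
    rw [h]
    have h1 : (1 - Real.exp (-(mu k * t))) / mu k ≤ 1 / mu k := by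
      gcongr; linarith [Real.exp_pos (-(mu k * t))]
    have h2 : 1 / mu k ≤ 2 * (1 / (1 + (k : ℝ) ^ 2)) := by
      rw [mul_one_div, div_le_div_iff₀ hmu0 (by positivity)]; linarith
    have h3 : 0 ≤ t * (1 / (1 + (k : ℝ) ^ 2)) := by positivity
    linarith

lemma integral_exp_mu_le' (k : ℤ) (hk : k ≠ 0) (t : ℝ) :
    ∫ s in (0 : ℝ)..t, Real.exp (-(mu k * s)) ≤ 2 * (1 / (1 + (k : ℝ) ^ 2)) := by
  have h1k : (1 : ℝ) ≤ (k : ℝ) ^ 2 := by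
    have : 1 ≤ k ^ 2 := by have := sq_nonneg k; have := pow_ne_zero 2 hk; omega
    exact_mod_cast this
  have hmu := sq_le_mu k
  have hmu0 : 0 < mu k := by linarith
  rw [integral_exp_mu_aux k hmu0 t]
  have h1 : (1 - Real.exp (-(mu k * t))) / mu k ≤ 1 / mu k := by
    gcongr; linarith [Real.exp_pos (-(mu k * t))]
  have h2 : 1 / mu k ≤ 2 * (1 / (1 + (k : ℝ) ^ 2)) := by
    rw [mul_one_div, div_le_div_iff₀ hmu0 (by positivity)]; linarith
  linarith

lemma abs_F_le (f1 f2 : ℝ → ℝ) (h1 : ∀ s, |f1 s| ≤ 1) (h2 : ∀ s, |f2 s| ≤ 1) (k : ℤ) (s : ℝ) :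
    |f1 s - phi k (-1) * f2 s| ≤ 2 := by
  refine (abs_sub _ _).trans ?_
  rw [abs_mul]
  have := mul_le_mul (abs_phi_le k (-1)) (h2 s) (abs_nonneg _) zero_le_one
  linarith [h1 s]

lemma abs_conv_le (f1 f2 : ℝ → ℝ) (h1 : ∀ s, |f1 s| ≤ 1)
    (h2 : ∀ s, |f2 s| ≤ 1) (k : ℤ) {t : ℝ} (ht : 0 ≤ t) :
    |∫ s in (0 : ℝ)..t, Real.exp (-(mu k * s)) * (f1 (t - s) - phi k (-1) * f2 (t - s))| ≤
      2 * ∫ s in (0 : ℝ)..t, Real.exp (-(mu k * s)) := by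
  rw [← intervalIntegral.integral_const_mul, ← Real.norm_eq_abs]
  refine intervalIntegral.norm_integral_le_of_norm_le ht (Filter.Eventually.of_forall ?_) ?_
  · intro s _
    rw [Real.norm_eq_abs, abs_mul, abs_of_pos (Real.exp_pos _)]
    have := abs_F_le f1 f2 h1 h2 k (t - s)
    nlinarith [Real.exp_pos (-(mu k * s))]
  · apply Continuous.intervalIntegrable; fun_prop

lemma rep_source (f1 f2 : ℝ → ℝ) (hf1 : Continuous f1) (hf2 : Continuous f2)
    (h1 : ∀ s, |f1 s| ≤ 1) (h2 : ∀ s, |f2 s| ≤ 1) {t : ℝ} (ht : 0 < t) (r : ℝ) :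
    HasSum (fun k : ℤ => (1 / 2) * (phi k r *
      ∫ s in (0 : ℝ)..t, Real.exp (-(mu k * s)) * (f1 (t - s) - phi k (-1) * f2 (t - s))))
      (∫ s in (0 : ℝ)..t, (P s r 1 * f1 (t - s) - P s r (-1) * f2 (t - s))) := by
  set H : ℤ → ℝ → ℝ := fun k s => (1 / 2) * (phi k r *
    (Real.exp (-(mu k * s)) * (f1 (t - s) - phi k (-1) * f2 (t - s)))) with hH
  have hcont : ∀ k, Continuous (H k) := fun k => by
    rw [hH]; fun_prop
  have hintg : ∀ k, Integrable (H k) (volume.restrict (Set.Ioc 0 t)) := fun k =>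
    (intervalIntegrable_iff_integrableOn_Ioc_of_le ht.le).mp ((hcont k).intervalIntegrable _ _)
  have hb : ∀ k s, ‖H k s‖ ≤ Real.exp (-(mu k * s)) := by
    intro k s
    rw [hH, Real.norm_eq_abs]
    simp only
    rw [abs_mul, abs_mul, abs_mul, abs_of_pos (Real.exp_pos _),
      abs_of_pos (by norm_num : (0 : ℝ) < 1 / 2)]
    have e1 := abs_F_le f1 f2 h1 h2 k (t - s)
    have e2 := abs_phi_le k r
    have e3 : |phi k r| * (Real.exp (-(mu k * s)) * |f1 (t - s) - phi k (-1) * f2 (t - s)|) ≤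
        1 * (Real.exp (-(mu k * s)) * 2) := by gcongr
    linarith
  have hsum : Summable fun k => ∫ s, ‖H k s‖ ∂(volume.restrict (Set.Ioc 0 t)) := by
    refine Summable.of_nonneg_of_le (fun k => integral_nonneg fun s => norm_nonneg _) (fun k => ?_)
      (summable_w.mul_left (2 + t))
    refine le_trans ?_ (integral_exp_mu_le k ht.le)
    rw [intervalIntegral.integral_of_le ht.le]
    refine integral_mono (hintg k).norm ?_ (hb k)
    refine (intervalIntegrable_iff_integrableOn_Ioc_of_le ht.le).mp ?_
    apply Continuous.intervalIntegrable; fun_prop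
  have hmain := hasSum_integral_of_summable_integral_norm hintg hsum
  have heq : ∫ s in (0 : ℝ)..t, (P s r 1 * f1 (t - s) - P s r (-1) * f2 (t - s)) =
      ∫ s, ∑' k, H k s ∂(volume.restrict (Set.Ioc 0 t)) := by
    rw [intervalIntegral.integral_of_le ht.le]
    refine setIntegral_congr_fun measurableSet_Ioc fun s hs => ?_
    have p1 := (P_hasSum hs.1 r 1).mul_right (f1 (t - s))
    have p2 := (P_hasSum hs.1 r (-1)).mul_right (f2 (t - s))
    have p3 : HasSum (fun k => H k s) (P s r 1 * f1 (t - s) - P s r (-1) * f2 (t - s)) :=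
      hasSum_congr_aux (fun k => by rw [hH, phi_one]; ring) (p1.sub p2)
    exact p3.tsum_eq.symm
  rw [heq]
  refine hasSum_congr_aux (fun k => ?_) hmain
  rw [← intervalIntegral.integral_of_le ht.le, hH, intervalIntegral.integral_const_mul,
    intervalIntegral.integral_const_mul]

lemma rep_initial (ρ₀ : ℝ → ℝ) (hm : Measurable ρ₀)
    (hρ : ∀ r ∈ Set.Icc (-1 : ℝ) 1, ρ₀ r ∈ Set.Icc (0 : ℝ) 1) {t : ℝ} (ht : 0 < t) (r : ℝ) :
    HasSum (fun k : ℤ => (1 / 2) * (phi k r * (Real.exp (-(mu k * t)) *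
      ∫ r' in (-1 : ℝ)..1, phi k r' * ρ₀ r')))
      (∫ r' in (-1 : ℝ)..1, P t r r' * ρ₀ r') := by
  have hmain := intervalIntegral.hasSum_integral_of_dominated_convergence (μ := volume)
    (a := -1) (b := 1)
    (F := fun k r' => (1 / 2) * (Real.exp (-(mu k * t)) * (phi k r * phi k r')) * ρ₀ r')
    (f := fun r' => P t r r' * ρ₀ r')
    (fun (k : ℤ) _ => Real.exp (-(mu k * t))) (fun k => ?_)
    (fun k => Filter.Eventually.of_forall fun r' hr' => ?_)
    (Filter.Eventually.of_forall fun r' _ => summable_exp_mu ht)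
    intervalIntegrable_const
    (Filter.Eventually.of_forall fun r' _ => (P_hasSum ht r r').mul_right _)
  · refine hasSum_congr_aux (fun k => ?_) hmain
    rw [← intervalIntegral.integral_const_mul, ← intervalIntegral.integral_const_mul,
      ← intervalIntegral.integral_const_mul]
    refine intervalIntegral.integral_congr fun r' _ => ?_
    ring
  · apply Measurable.aestronglyMeasurable
    have : Measurable (phi k) := by unfold phi; fun_prop
    fun_prop
  · rw [Set.uIoc_of_le (by norm_num)] at hr'
    have h0 := hρ r' ⟨hr'.1.le, hr'.2⟩
    rw [Real.norm_eq_abs, abs_mul, abs_mul, abs_mul, abs_mul, abs_of_pos (Real.exp_pos _),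
      abs_of_nonneg h0.1, abs_of_pos (by norm_num : (0 : ℝ) < 1 / 2)]
    have e : 1 / 2 * (Real.exp (-(mu k * t)) * (|phi k r| * |phi k r'|)) * ρ₀ r' ≤
        1 / 2 * (Real.exp (-(mu k * t)) * (1 * 1)) * 1 := by
      have := abs_phi_le k r
      have := abs_phi_le k r'
      have := h0.2
      have := h0.1
      gcongr
    linarith [Real.exp_pos (-(mu k * t))]

lemma abs_init_le (ρ₀ : ℝ → ℝ)
    (hρ : ∀ r ∈ Set.Icc (-1 : ℝ) 1, ρ₀ r ∈ Set.Icc (0 : ℝ) 1) (k : ℤ) :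
    |∫ r' in (-1 : ℝ)..1, phi k r' * ρ₀ r'| ≤ 2 := by
  have := intervalIntegral.norm_integral_le_of_norm_le_const (a := (-1 : ℝ)) (b := 1) (C := 1)
    (f := fun r' => phi k r' * ρ₀ r') (fun r' hr' => ?_)
  · rw [Real.norm_eq_abs] at this
    norm_num at this
    exact this
  · rw [Set.uIoc_of_le (by norm_num)] at hr'
    have h0 := hρ r' ⟨hr'.1.le, hr'.2⟩
    rw [Real.norm_eq_abs, abs_mul, abs_of_nonneg h0.1]
    have := mul_le_mul (abs_phi_le k r') h0.2 h0.1 zero_le_one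
    linarith

lemma conv_eq (F : ℝ → ℝ) (k : ℤ) (t : ℝ) :
    ∫ s in (0 : ℝ)..t, Real.exp (-(mu k * s)) * F (t - s) =
      Real.exp (-(mu k * t)) * ∫ s in (0 : ℝ)..t, Real.exp (mu k * s) * F s := by
  have h := intervalIntegral.integral_comp_sub_left (a := 0) (b := t)
    (fun τ => Real.exp (-(mu k * (t - τ))) * F τ) t
  simp only [sub_sub_cancel, sub_self, sub_zero] at h
  rw [h, ← intervalIntegral.integral_const_mul]
  refine intervalIntegral.integral_congr fun s _ => ?_
  rw [← mul_assoc, ← Real.exp_add]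
  congr 2; ring

lemma conv_deriv (F : ℝ → ℝ) (hF : Continuous F) (k : ℤ) (a b t : ℝ) :
    HasDerivAt (fun t => Real.exp (-(mu k * t)) * a + b *
      ∫ s in (0 : ℝ)..t, Real.exp (-(mu k * s)) * F (t - s))
      (-(mu k * (Real.exp (-(mu k * t)) * a + b *
        ∫ s in (0 : ℝ)..t, Real.exp (-(mu k * s)) * F (t - s))) + b * F t) t := by
  simp_rw [conv_eq F k]
  have hc : Continuous fun s => Real.exp (mu k * s) * F s := by fun_prop
  have h1 : HasDerivAt (fun t => ∫ s in (0 : ℝ)..t, Real.exp (mu k * s) * F s)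
      (Real.exp (mu k * t) * F t) t :=
    intervalIntegral.integral_hasDerivAt_right (hc.intervalIntegrable _ _)
      (hc.stronglyMeasurableAtFilter _ _) hc.continuousAt
  have h2 : HasDerivAt (fun t => Real.exp (-(mu k * t)))
      (Real.exp (-(mu k * t)) * -(mu k * 1)) t :=
    ((hasDerivAt_id t).const_mul (mu k)).neg.exp
  have h3 := (h2.mul_const a).add ((h2.mul h1).const_mul b)
  refine h3.congr_deriv ?_
  have : Real.exp (-(mu k * t)) * Real.exp (mu k * t) = 1 := by
    rw [← Real.exp_add]; simp
  linear_combination b * F t * this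

lemma pow_dissip (K : ℕ) (hK : 1 ≤ K) {u a : ℝ} (hu : 0 ≤ u) (ha : 0 ≤ a) :
    a ^ (K - 1) * (u - a) ^ 2 ≤ (u ^ K - a ^ K) * (u - a) := by
  have h := geom_sum₂_mul u a K
  rw [← h, mul_assoc, ← sq]
  refine mul_le_mul_of_nonneg_right ?_ (sq_nonneg _)
  have := Finset.single_le_sum (f := fun i => u ^ i * a ^ (K - 1 - i))
    (fun i _ => by positivity) (Finset.mem_range.mpr (by omega : 0 < K))
  simpa using this

lemma abs_cst_le (β : ℝ) (k : ℤ) (hk : k ≠ 0) :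
    |cst β k| ≤ 2 * |β| * (1 / (1 + (k : ℝ) ^ 2)) := by
  have h1k : (1 : ℝ) ≤ (k : ℝ) ^ 2 := by
    have : 1 ≤ k ^ 2 := by have := sq_nonneg k; have := pow_ne_zero 2 hk; omega
    exact_mod_cast this
  have hmu := sq_le_mu k
  have hmu0 : 0 < mu k := by linarith
  have h2 : 1 / mu k ≤ 2 * (1 / (1 + (k : ℝ) ^ 2)) := by
    rw [mul_one_div, div_le_div_iff₀ hmu0 (by positivity)]; linarith
  have h3 : |1 - phi k (-1)| ≤ 2 := by
    have := abs_le.mp (abs_phi_le k (-1))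
    rw [abs_le]; constructor <;> linarith
  unfold cst
  rw [if_neg hk, zero_add, abs_div, abs_mul, abs_of_pos hmu0, abs_div, abs_two]
  calc |β| / 2 * |1 - phi k (-1)| / mu k ≤ |β| / 2 * 2 / mu k := by gcongr
    _ = |β| * (1 / mu k) := by ring
    _ ≤ |β| * (2 * (1 / (1 + (k : ℝ) ^ 2))) := by gcongr
    _ = _ := by ring

lemma mu_mul_cst (β : ℝ) (k : ℤ) : mu k * cst β k = β / 2 * (1 - phi k (-1)) := by
  by_cases hk : k = 0
  · subst hk; simp [mu, phi]
  · have hk' : (k : ℝ) ≠ 0 := by exact_mod_cast hk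
    have : mu k ≠ 0 := by unfold mu; positivity
    unfold cst
    rw [if_neg hk]
    field_simp
    ring

lemma zero_mode_le (c : ℤ → ℝ) (x B : ℝ) (hB : 0 ≤ B) (hc : HasSum c (2 * x)) (hx : |x| ≤ 1)
    (hb : ∀ k, k ≠ 0 → |c k| ≤ B * (1 / (1 + (k : ℝ) ^ 2))) :
    |c 0| ≤ 2 + B * ∑' k : ℤ, 1 / (1 + (k : ℝ) ^ 2) := by
  have hT : HasSum (fun k : ℤ => if k = 0 then 0 else c k) (2 * x - c 0) := by
    have := hc.sub (hasSum_ite_eq (0 : ℤ) (c 0))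
    refine hasSum_congr_aux (fun k => ?_) this
    by_cases hk : k = 0 <;> simp [hk]
  have h1 : |2 * x - c 0| ≤ B * ∑' k : ℤ, 1 / (1 + (k : ℝ) ^ 2) := by
    rw [← hT.tsum_eq, ← tsum_mul_left, ← Real.norm_eq_abs]
    refine tsum_of_norm_bounded (summable_w.mul_left B).hasSum fun k => ?_
    by_cases hk : k = 0
    · simp [hk, hB]
    · simpa [hk] using hb k hk
  have h2 := abs_le.mp h1
  have h3 := abs_le.mp hx
  rw [abs_le]; constructor <;> linarith

/-- Exponential convergence to the stationary profile: with
`ρ*(r) = j·(1−α^K)·r + 1/2`, `α ∈ (1/2,1)` the unique solution of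
`α + j·α^K = j + 1/2`, there exist `c, c' > 0` such that for every bounded
measurable initial datum `ρ₀ : [−1,1] → [0,1]` and every solution `ρ` of the
macroscopic integral equation with initial datum `ρ₀` having continuous boundary
traces, `sup_{r∈[−1,1]} |ρ(r,t) − ρ*(r)| ≤ c'·e^{−c·t}` for all `t > 0`. -/
theorem macro_exponential_convergence (j : ℝ) (hj : 0 < j) (K : ℕ) (hK : 1 ≤ K)
    (α : ℝ) (hα : α ∈ Set.Ioo (1 / 2 : ℝ) 1) (hαeq : α + j * α ^ K = j + 1 / 2) :
    ∃ c : ℝ, 0 < c ∧ ∃ c' : ℝ, 0 < c' ∧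
      ∀ (ρ₀ : ℝ → ℝ) (ρ : ℝ → ℝ → ℝ),
        Measurable ρ₀ →
        (∀ r ∈ Set.Icc (-1 : ℝ) 1, ρ₀ r ∈ Set.Icc (0 : ℝ) 1) →
        IsMacroSolution j K ρ₀ ρ →
        ContinuousOn (fun t => ρ 1 t) (Set.Ici (0 : ℝ)) →
        ContinuousOn (fun t => ρ (-1) t) (Set.Ici (0 : ℝ)) →
        ∀ t : ℝ, 0 < t → ∀ r ∈ Set.Icc (-1 : ℝ) 1,
          |ρ r t - (j * (1 - α ^ K) * r + 1 / 2)| ≤ c' * Real.exp (-c * t) := by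
  obtain ⟨hα1, hα2⟩ := hα
  have hα0 : 0 < α := by linarith
  set β := j * (1 - α ^ K) with hβ
  have hβα : β = α - 1 / 2 := by rw [hβ]; linarith
  have hβ0 : 0 ≤ β := by linarith
  set W := ∑' k : ℤ, 1 / (1 + (k : ℝ) ^ 2) with hW
  have hW0 : 0 ≤ W := tsum_nonneg fun k => by positivity
  set B1 := 4 + 2 * j + 2 * |β| with hB1
  have hB10 : 0 ≤ B1 := by positivity
  obtain ⟨γ, hγ, C, hC, hcore⟩ := decay_core (B1 + (2 + B1 * W)) (j / 2) (j / 2 * α ^ (K - 1))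
    (by positivity) (by positivity) (by positivity)
  refine ⟨γ, hγ, C + Real.exp (2 * γ), by positivity, ?_⟩
  intro ρ₀ ρ hm hρ₀ hsol hc1 hc2
  obtain ⟨-, hrange, -, heq⟩ := hsol
  have m1 : (1 : ℝ) ∈ Set.Icc (-1 : ℝ) 1 := by constructor <;> norm_num
  have m2 : (-1 : ℝ) ∈ Set.Icc (-1 : ℝ) 1 := by constructor <;> norm_num
  -- globally continuous boundary traces
  set u1 : ℝ → ℝ := fun τ => ρ 1 (max τ 0) with hu1
  set u2 : ℝ → ℝ := fun τ => ρ (-1) (max τ 0) with hu2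
  have cu1 : Continuous u1 := hc1.comp_continuous (by fun_prop) fun τ => Set.mem_Ici.mpr (le_max_right _ _)
  have cu2 : Continuous u2 := hc2.comp_continuous (by fun_prop) fun τ => Set.mem_Ici.mpr (le_max_right _ _)
  have ru1 : ∀ τ, u1 τ ∈ Set.Icc (0 : ℝ) 1 := fun τ => hrange 1 m1 _ (le_max_right _ _)
  have ru2 : ∀ τ, u2 τ ∈ Set.Icc (0 : ℝ) 1 := fun τ => hrange (-1) m2 _ (le_max_right _ _)
  have pu1 : ∀ τ, 0 ≤ u1 τ ^ K ∧ u1 τ ^ K ≤ 1 := fun τ =>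
    ⟨pow_nonneg (ru1 τ).1 _, pow_le_one₀ (ru1 τ).1 (ru1 τ).2⟩
  have pu2 : ∀ τ, 0 ≤ (1 - u2 τ) ^ K ∧ (1 - u2 τ) ^ K ≤ 1 := fun τ =>
    ⟨pow_nonneg (by linarith [(ru2 τ).2]) _,
      pow_le_one₀ (by linarith [(ru2 τ).2]) (by linarith [(ru2 τ).1])⟩
  have pα : 0 ≤ α ^ K ∧ α ^ K ≤ 1 := ⟨by positivity, pow_le_one₀ hα0.le hα2.le⟩
  set f1 : ℝ → ℝ := fun τ => 1 - u1 τ ^ K with hf1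
  set f2 : ℝ → ℝ := fun τ => 1 - (1 - u2 τ) ^ K with hf2
  have cf1 : Continuous f1 := by rw [hf1]; fun_prop
  have cf2 : Continuous f2 := by rw [hf2]; fun_prop
  have bf1 : ∀ τ, |f1 τ| ≤ 1 := fun τ => by
    rw [hf1, abs_le]; constructor <;> linarith [(pu1 τ).1, (pu1 τ).2]
  have bf2 : ∀ τ, |f2 τ| ≤ 1 := fun τ => by
    rw [hf2, abs_le]; constructor <;> linarith [(pu2 τ).1, (pu2 τ).2]
  set c : ℤ → ℝ → ℝ := fun k t => (Real.exp (-(mu k * t)) * (∫ r' in (-1 : ℝ)..1, phi k r' * ρ₀ r')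
    + j / 2 * ∫ s in (0 : ℝ)..t,
      Real.exp (-(mu k * s)) * (f1 (t - s) - phi k (-1) * f2 (t - s))) - cst β k with hcdef
  have hrep : ∀ t, 0 < t → ∀ r ∈ Set.Icc (-1 : ℝ) 1,
      HasSum (fun k => (1 / 2) * (phi k r * c k t)) (ρ r t - (β * r + 1 / 2)) := by
    intro t ht r hr
    have h1 := rep_initial ρ₀ hm hρ₀ ht r
    have h2 := (rep_source f1 f2 cf1 cf2 bf1 bf2 ht r).mul_left (j / 2)
    have h3 := (h1.add h2).sub (cst_hasSum β hr)
    have h4 : ρ r t = (∫ r' in (-1 : ℝ)..1, P t r r' * ρ₀ r') + j / 2 *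
        ∫ s in (0 : ℝ)..t, (P s r 1 * f1 (t - s) - P s r (-1) * f2 (t - s)) := by
      rw [heq t ht r hr]
      congr 2
      refine intervalIntegral.integral_congr fun s hs => ?_
      rw [Set.uIcc_of_le ht.le] at hs
      have : max (t - s) 0 = t - s := max_eq_left (by linarith [hs.2])
      simp only [hf1, hf2, hu1, hu2, this]
    rw [h4]
    exact hasSum_congr_aux (fun k => by rw [hcdef]; ring) h3
  have hx : ∀ t, 1 < t → HasSum (fun k => c k t) (2 * (u1 t - α)) := by
    intro t ht
    have h := (hrep t (by linarith) 1 m1).mul_left 2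
    have e : ρ 1 t - (β * 1 + 1 / 2) = u1 t - α := by
      simp only [hu1, max_eq_left (by linarith : (0 : ℝ) ≤ t)]; linarith
    rw [e] at h
    exact hasSum_congr_aux (fun k => by rw [phi_one]; ring) h
  have hy : ∀ t, 1 < t → HasSum (fun k => phi k (-1) * c k t) (2 * (u2 t - (1 - α))) := by
    intro t ht
    have h := (hrep t (by linarith) (-1) m2).mul_left 2
    have e : ρ (-1) t - (β * (-1) + 1 / 2) = u2 t - (1 - α) := by
      simp only [hu2, max_eq_left (by linarith : (0 : ℝ) ≤ t)]; linarith
    rw [e] at h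
    exact hasSum_congr_aux (fun k => by ring) h
  have hbd : ∀ k t, 1 < t → |c k t| ≤ (B1 + (2 + B1 * W)) * (1 / (1 + (k : ℝ) ^ 2)) := by
    intro k t ht
    have hk1 : ∀ k : ℤ, k ≠ 0 → |c k t| ≤ B1 * (1 / (1 + (k : ℝ) ^ 2)) := by
      intro k hk
      have a1 := exp_mu_le k zero_lt_one ht.le
      have a2 := abs_init_le ρ₀ hρ₀ k
      have a3 := abs_conv_le f1 f2 bf1 bf2 k (by linarith : (0 : ℝ) ≤ t)
      have a4 := integral_exp_mu_le' k hk t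
      have a5 := abs_cst_le β k hk
      set w := 1 / (1 + (k : ℝ) ^ 2)
      have hw : 0 ≤ w := by positivity
      rw [hcdef]
      refine (abs_sub _ _).trans ?_
      refine (add_le_add ((abs_add_le _ _).trans (add_le_add ?_ ?_)) a5).trans
        (?_ : 4 * w + 2 * j * w + 2 * |β| * w ≤ B1 * w)
      · rw [abs_mul, abs_of_pos (Real.exp_pos _)]
        have := mul_le_mul a1 a2 (abs_nonneg _) (by positivity)
        linarith
      · rw [abs_mul, abs_of_pos (by positivity : 0 < j / 2)]
        have : j / 2 * |∫ s in (0 : ℝ)..t,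
            Real.exp (-(mu k * s)) * (f1 (t - s) - phi k (-1) * f2 (t - s))| ≤
            j / 2 * (2 * (2 * w)) := by
          refine mul_le_mul_of_nonneg_left ?_ (by positivity)
          linarith
        linarith
      · rw [hB1]; apply le_of_eq; ring
    by_cases hk : k = 0
    · subst hk
      have h := zero_mode_le (fun k => c k t) (u1 t - α) B1 hB10 (hx t ht)
        (by rw [abs_le]; constructor <;> linarith [(ru1 t).1, (ru1 t).2]) hk1
      rw [← hW] at h
      simp only [Int.cast_zero]
      norm_num
      linarith
    · refine (hk1 k hk).trans ?_
      gcongr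
      have : 0 ≤ B1 * W := by positivity
      linarith
  have hder : ∀ k t, 1 < t → HasDerivAt (c k) (-(mu k * c k t) - (j / 2 * (u1 t ^ K - α ^ K)) -
      phi k (-1) * (j / 2 * (α ^ K - (1 - u2 t) ^ K))) t := by
    intro k t _
    have h := (conv_deriv (fun s => f1 s - phi k (-1) * f2 s) (by fun_prop) k
      (∫ r' in (-1 : ℝ)..1, phi k r' * ρ₀ r') (j / 2) t).sub_const (cst β k)
    refine h.congr_deriv ?_
    have e := mu_mul_cst β k
    rw [hβ] at e
    simp only [hcdef, hf1, hf2]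
    linear_combination (-1) * e
  have hdec := hcore c (fun t => j / 2 * (u1 t ^ K - α ^ K))
    (fun t => j / 2 * (α ^ K - (1 - u2 t) ^ K)) (fun t => u1 t - α) (fun t => u2 t - (1 - α))
    (fun k => phi k (-1)) (fun k => abs_phi_le k _)
    (fun t _ => by
      rw [abs_mul, abs_of_pos (by positivity : 0 < j / 2)]
      have : |u1 t ^ K - α ^ K| ≤ 1 := by
        rw [abs_le]; constructor <;> linarith [(pu1 t).1, (pu1 t).2, pα.1, pα.2]
      nlinarith)
    (fun t _ => by
      rw [abs_mul, abs_of_pos (by positivity : 0 < j / 2)]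
      have : |α ^ K - (1 - u2 t) ^ K| ≤ 1 := by
        rw [abs_le]; constructor <;> linarith [(pu2 t).1, (pu2 t).2, pα.1, pα.2]
      nlinarith)
    hder hbd hx hy
    (fun t _ => by
      have := mul_le_mul_of_nonneg_left (pow_dissip K hK (ru1 t).1 hα0.le)
        (by positivity : 0 ≤ j / 2)
      linarith)
    (fun t _ => by
      have h1 := pow_dissip K hK (u := 1 - u2 t) (by linarith [(ru2 t).2]) hα0.le
      have h2 : 0 ≤ α ^ (K - 1) * (1 - u2 t - α) ^ 2 := by positivity
      have h3 := mul_nonneg (by positivity : 0 ≤ j / 2) (h2.trans h1)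
      linarith)
  intro t ht r hr
  by_cases ht2 : 2 ≤ t
  · have ht1 : 1 < t := by linarith
    have hsum : Summable fun k => |c k t| :=
      Summable.of_nonneg_of_le (fun _ => abs_nonneg _) (fun k => hbd k t ht1)
        (summable_w.mul_left _)
    have h1 : |ρ r t - (β * r + 1 / 2)| ≤ ∑' k, |c k t| := by
      rw [← (hrep t ht r hr).tsum_eq, ← Real.norm_eq_abs]
      refine tsum_of_norm_bounded hsum.hasSum fun k => ?_
      rw [Real.norm_eq_abs, abs_mul, abs_mul, abs_of_pos (by norm_num : (0 : ℝ) < 1 / 2)]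
      nlinarith [abs_phi_le k r, abs_nonneg (c k t), abs_nonneg (phi k r)]
    refine h1.trans ((hdec t ht2).trans ?_)
    gcongr
    linarith [Real.exp_pos (2 * γ)]
  · have h1 : |ρ r t - (β * r + 1 / 2)| ≤ 1 := by
      have hr1 := hrange r hr t ht.le
      have b1 : β * r ≤ β := by nlinarith [hr.2]
      have b2 : -β ≤ β * r := by nlinarith [hr.1]
      rw [abs_le]; constructor <;> linarith [hr1.1, hr1.2]
    refine h1.trans ?_
    have h2 : 1 ≤ Real.exp (2 * γ) * Real.exp (-γ * t) := by
      rw [← Real.exp_add]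
      apply Real.one_le_exp
      nlinarith
    have h3 : 0 ≤ C * Real.exp (-γ * t) := by positivity
    linarith
end

section
/- (Uniqueness of the stationary solution.) Let j > 0 and K ≥ 1 an integer. Suppose ρ̂ : [−1,1] → [0,1] is continuous and the time-independent function ρ(r,t) := ρ̂(r) solves the macroscopic integral equation with initial datum ρ̂. Then ρ̂(r) = j·(1−α^K)·r + 1/2 for all r ∈ [−1,1], where α ∈ (1/2,1) is the unique solution of α + j·α^K = j + 1/2. -/
open MeasureTheory

open Set

noncomputable def Q (t r y : ℝ) : ℝ := ∑' n : ℤ, (G t r (y + 4 * n) + G t r (2 - y + 4 * n))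

lemma G_nonneg (t r y : ℝ) : 0 ≤ G t r y := by unfold G; positivity

lemma G_summable {t : ℝ} (ht : 0 < t) (r y : ℝ) : Summable fun n : ℤ => G t r (y + 4 * n) := by
  have h := HurwitzKernelBounds.summable_f_int 0 ((y - r) / 4) (t := 8 / (Real.pi * t)) (by positivity)
  have := h.div_const (Real.sqrt (2 * Real.pi * t))
  refine this.congr fun n => ?_
  unfold G HurwitzKernelBounds.f_int
  have := Real.pi_pos
  congr 1
  rw [pow_zero, one_mul]
  congr 1
  field_simp
  ring

lemma P_eq_Q {t : ℝ} (ht : 0 < t) (r y : ℝ) : P t r y = Q t r y := by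
  unfold P Q
  split_ifs with h
  · rcases h with rfl | rfl
    · congr 1; ext n
      norm_num; ring
    · rw [(G_summable ht r (-1)).tsum_add (G_summable ht r (2 - -1)), tsum_mul_left, two_mul]
      congr 1
      rw [← (Equiv.addRight (1 : ℤ)).tsum_eq]
      congr 1; ext n
      simp only [Equiv.coe_addRight]
      congr 1
      push_cast; ring
  · rfl

lemma G_meas : Measurable fun p : ℝ × ℝ × ℝ => G p.1 p.2.1 p.2.2 := by
  unfold G; fun_prop

lemma Q_nonneg (t r y : ℝ) : 0 ≤ Q t r y :=
  tsum_nonneg fun n => add_nonneg (G_nonneg _ _ _) (G_nonneg _ _ _)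

lemma Q_meas : Measurable fun p : ℝ × ℝ × ℝ => Q p.1 p.2.1 p.2.2 := by
  have : (fun p : ℝ × ℝ × ℝ => Q p.1 p.2.1 p.2.2) = fun p =>
      (∑' n : ℤ, ENNReal.ofReal (G p.1 p.2.1 (p.2.2 + 4 * n) + G p.1 p.2.1 (2 - p.2.2 + 4 * n))).toReal := by
    ext p
    rw [ENNReal.tsum_toReal_eq (fun _ => ENNReal.ofReal_ne_top)]
    unfold Q
    congr 1; ext n
    rw [ENNReal.toReal_ofReal (add_nonneg (G_nonneg _ _ _) (G_nonneg _ _ _))]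
  rw [this]
  refine (Measurable.tsum fun n => ?_).ennreal_toReal
  refine (Measurable.add ?_ ?_).ennreal_ofReal
  · exact G_meas.comp (f := fun p : ℝ × ℝ × ℝ => (p.1, p.2.1, p.2.2 + 4 * n)) (by fun_prop)
  · exact G_meas.comp (f := fun p : ℝ × ℝ × ℝ => (p.1, p.2.1, 2 - p.2.2 + 4 * n)) (by fun_prop)

/-- cosine modes -/
noncomputable def F (n : ℕ) (r : ℝ) : ℝ := Real.cos (n * Real.pi / 2 * (r + 1))

lemma F_cont (n : ℕ) : Continuous (F n) := by unfold F; fun_prop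
lemma F_abs (n : ℕ) (r : ℝ) : |F n r| ≤ 1 := Real.abs_cos_le_one _
lemma F_zero (r : ℝ) : F 0 r = 1 := by simp [F]
lemma F_per (n : ℕ) (r : ℝ) (m : ℤ) : F n (r + 4 * m) = F n r := by
  unfold F
  rw [← Real.cos_add_int_mul_two_pi (n * Real.pi / 2 * (r + 1)) (n * m)]
  congr 1; push_cast; ring
lemma F_refl (n : ℕ) (r : ℝ) (m : ℤ) : F n (2 + 4 * m - r) = F n r := by
  unfold F
  rw [← Real.cos_neg (n * Real.pi / 2 * (r + 1)), ← Real.cos_add_int_mul_two_pi (-(n * Real.pi / 2 * (r + 1))) (n * (m + 1))]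
  congr 1; push_cast; ring

lemma G_eq_pdf {t : ℝ} (ht : 0 < t) (r y : ℝ) :
    G t r y = ProbabilityTheory.gaussianPDFReal y t.toNNReal r := by
  unfold G ProbabilityTheory.gaussianPDFReal
  rw [Real.coe_toNNReal t ht.le]
  rw [div_eq_inv_mul]

lemma G_int {t : ℝ} (ht : 0 < t) (y : ℝ) : Integrable fun r => G t r y := by
  simp_rw [G_eq_pdf ht]
  exact ProbabilityTheory.integrable_gaussianPDFReal _ _

lemma F_abs_ae (μ : Measure ℝ) (n : ℕ) : ∀ᵐ r ∂μ, ‖F n r‖ ≤ 1 :=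
  Filter.Eventually.of_forall fun r => F_abs n r

lemma FG_int {t : ℝ} (ht : 0 < t) (n : ℕ) (y : ℝ) : Integrable fun r => F n r * G t r y :=
  (G_int ht y).bdd_mul (c := 1) (F_cont n).aestronglyMeasurable
    (F_abs_ae _ n)

lemma FG_val {t : ℝ} (ht : 0 < t) (n : ℕ) (y : ℝ) :
    ∫ r, F n r * G t r y = Real.exp (-(n * Real.pi / 2) ^ 2 / 2 * t) * F n y := by
  set k : ℝ := n * Real.pi / 2 with hk
  have hv : t.toNNReal ≠ 0 := by
    simpa using ht
  have h1 := ProbabilityTheory.charFun_gaussianReal (μ := y) (v := t.toNNReal) k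
  rw [charFun_apply_real, ProbabilityTheory.integral_gaussianReal_eq_integral_smul hv] at h1
  have h2 : ∫ r : ℝ, F n r * G t r y
      = (∫ r : ℝ, Complex.exp (k * Complex.I) * (ProbabilityTheory.gaussianPDFReal y t.toNNReal r • Complex.exp (k * r * Complex.I))).re := by
    have h3 : Integrable fun r : ℝ => Complex.exp (k * Complex.I) * (ProbabilityTheory.gaussianPDFReal y t.toNNReal r • Complex.exp (k * r * Complex.I)) := by
      apply Integrable.const_mul
      simp_rw [Complex.real_smul]
      refine Integrable.mul_bdd (c := 1) ?_ ?_ ?_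
      · exact (ProbabilityTheory.integrable_gaussianPDFReal _ _).ofReal
      · exact Continuous.aestronglyMeasurable (by fun_prop)
      · refine Filter.Eventually.of_forall fun r => ?_
        have := Complex.norm_exp_ofReal_mul_I (k * r)
        push_cast at this
        exact this.le
    have := integral_re h3
    simp only [RCLike.re_to_complex] at this
    rw [← this]
    congr 1; ext r
    rw [G_eq_pdf ht, Complex.real_smul, mul_left_comm, ← Complex.exp_add, Complex.re_ofReal_mul]
    have : (k : ℂ) * Complex.I + k * r * Complex.I = ((k * (r + 1) : ℝ) : ℂ) * Complex.I := by
      push_cast; ring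
    rw [this, Complex.exp_ofReal_mul_I_re, mul_comm]
    rfl
  rw [h2, integral_const_mul, h1, ← Complex.exp_add]
  have : (k : ℂ) * Complex.I + (k * y * Complex.I - (t.toNNReal : ℝ) * k ^ 2 / 2)
      = ((-k ^ 2 / 2 * t : ℝ) : ℂ) + ((k * (y + 1) : ℝ) : ℂ) * Complex.I := by
    rw [Real.coe_toNNReal t ht.le]; push_cast; ring
  rw [this, Complex.exp_add, ← Complex.ofReal_exp, Complex.re_ofReal_mul, Complex.exp_ofReal_mul_I_re]
  rfl

lemma unfold_sum {h : ℝ → ℝ} (hh : Integrable h) :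
    Summable (fun n : ℤ => ∫ r in (-1 : ℝ)..1, h (r - 4 * n)) ∧
    Summable (fun n : ℤ => ∫ r in (-1 : ℝ)..1, h (2 + 4 * n - r)) ∧
    ∑' n : ℤ, ((∫ r in (-1 : ℝ)..1, h (r - 4 * n)) + ∫ r in (-1 : ℝ)..1, h (2 + 4 * n - r)) = ∫ r, h r := by
  have key : HasSum (fun m : ℤ => ∫ r in Ioc (-1 + m • (2:ℝ)) (-1 + (m + 1) • (2:ℝ)), h r) (∫ r, h r) := by
    have := hasSum_integral_iUnion (μ := volume) (f := h) (s := fun m : ℤ => Ioc (-1 + m • (2:ℝ)) (-1 + (m + 1) • (2:ℝ)))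
      (fun _ => measurableSet_Ioc) (pairwise_disjoint_Ioc_add_zsmul (-1 : ℝ) (2 : ℝ)) hh.integrableOn
    rwa [iUnion_Ioc_add_zsmul (by norm_num : (0:ℝ) < 2), setIntegral_univ] at this
  set f := (fun m : ℤ => ∫ r in Ioc (-1 + m • (2:ℝ)) (-1 + (m + 1) • (2:ℝ)), h r) with hf
  have hfv : ∀ m : ℤ, f m = ∫ r in (-1 + 2 * m : ℝ)..(1 + 2 * m), h r := by
    intro m
    rw [intervalIntegral.integral_of_le (by linarith), hf]
    simp only [zsmul_eq_mul]
    congr 3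
    · ring
    · push_cast; ring
  have e1 : ∀ n : ℤ, (∫ r in (-1 : ℝ)..1, h (r - 4 * n)) = f (2 * (-n)) := by
    intro n
    rw [intervalIntegral.integral_comp_sub_right, hfv]
    congr 1 <;> push_cast <;> ring
  have e2 : ∀ n : ℤ, (∫ r in (-1 : ℝ)..1, h (2 + 4 * n - r)) = f (2 * n + 1) := by
    intro n
    rw [intervalIntegral.integral_comp_sub_left, hfv]
    congr 1 <;> push_cast <;> ring
  have s1 : Summable fun n : ℤ => f (2 * n) := key.summable.comp_injective (i := fun n : ℤ => 2 * n) (fun a b h => by simpa using h)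
  have s2 : Summable fun n : ℤ => f (2 * n + 1) := key.summable.comp_injective (i := fun n : ℤ => 2 * n + 1) (fun a b h => by simpa using h)
  have s1' : Summable fun n : ℤ => f (2 * (-n)) := (Equiv.neg ℤ).summable_iff.mpr s1
  simp_rw [e1, e2]
  refine ⟨s1', s2, ?_⟩
  rw [s1'.tsum_add s2, show ∑' n : ℤ, f (2 * (-n)) = ∑' n : ℤ, f (2 * n) from (Equiv.neg ℤ).tsum_eq (fun n => f (2 * n))]
  have i1 : Function.Injective fun n : ℤ => 2 * n := fun a b h => by simpa using h
  have i2 : Function.Injective fun n : ℤ => 2 * n + 1 := fun a b h => by simpa using h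
  have hcompl : IsCompl (range fun n : ℤ => 2 * n) (range fun n : ℤ => 2 * n + 1) := by
    rw [isCompl_iff, Set.disjoint_left, codisjoint_iff]
    constructor
    · rintro _ ⟨a, rfl⟩ ⟨b, hb⟩
      simp only at hb; omega
    · ext m
      simp only [sup_eq_union, top_eq_univ, mem_union, mem_range, mem_univ, iff_true]
      rcases Int.even_or_odd' m with ⟨k, hk | hk⟩
      · exact Or.inl ⟨k, hk.symm⟩
      · exact Or.inr ⟨k, hk.symm⟩
  have k1 : HasSum (f ∘ fun n : ℤ => 2 * n) (∑' n : ℤ, f (2 * n)) := s1.hasSum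
  have k2 : HasSum (f ∘ fun n : ℤ => 2 * n + 1) (∑' n : ℤ, f (2 * n + 1)) := s2.hasSum
  have k3 := i1.hasSum_range_iff.mpr k1
  have k4 := i2.hasSum_range_iff.mpr k2
  exact (HasSum.add_isCompl (f := f) hcompl k3 k4).unique key

lemma FQ_val {t : ℝ} (ht : 0 < t) (n : ℕ) (y : ℝ) :
    ∫ r in Ioc (-1 : ℝ) 1, F n r * Q t r y = Real.exp (-(n * Real.pi / 2) ^ 2 / 2 * t) * F n y := by
  have g1 : ∀ (k : ℕ) (m : ℤ) (r : ℝ), F k (r - 4 * m) * G t (r - 4 * m) y = F k r * G t r (y + 4 * m) := by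
    intro k m r
    have := F_per k r (-m)
    push_cast at this
    rw [show r - 4 * (m : ℝ) = r + 4 * -m by ring, this]
    unfold G
    ring_nf
  have g2 : ∀ (k : ℕ) (m : ℤ) (r : ℝ), F k (2 + 4 * m - r) * G t (2 + 4 * m - r) y = F k r * G t r (2 - y + 4 * m) := by
    intro k m r
    rw [F_refl]
    unfold G
    ring_nf
  obtain ⟨a1, a2, a3⟩ := unfold_sum (FG_int ht n y)
  obtain ⟨b1, b2, b3⟩ := unfold_sum (FG_int ht 0 y)
  simp_rw [g1, g2] at a1 a2 a3 b1 b2 b3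
  have i1 : ∀ (k : ℕ) (z : ℝ), IntervalIntegrable (fun r => F k r * G t r z) volume (-1) 1 :=
    fun k z => (FG_int ht k z).intervalIntegrable
  rw [FG_val ht] at a3
  rw [← a3]
  have hs := hasSum_integral_of_summable_integral_norm (μ := volume.restrict (Ioc (-1 : ℝ) 1))
    (F := fun (m : ℤ) r => F n r * G t r (y + 4 * m) + F n r * G t r (2 - y + 4 * m)) 
    (fun m => ((FG_int ht n _).add (FG_int ht n _)).integrableOn) ?_
  · have e : ∀ r, F n r * Q t r y = ∑' m : ℤ, (F n r * G t r (y + 4 * m) + F n r * G t r (2 - y + 4 * m)) := by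
      intro r
      unfold Q
      rw [← tsum_mul_left]
      simp_rw [mul_add]
    simp_rw [e]
    rw [← hs.tsum_eq]
    congr 1; ext m
    rw [← intervalIntegral.integral_add (i1 _ _) (i1 _ _), intervalIntegral.integral_of_le (by norm_num)]
  · refine Summable.of_nonneg_of_le (fun m => integral_nonneg fun r => norm_nonneg _) (fun m => ?_) (b1.add b2)
    rw [← intervalIntegral.integral_add (i1 _ _) (i1 _ _), intervalIntegral.integral_of_le (by norm_num)]
    apply integral_mono
    · exact ((FG_int ht n _).add (FG_int ht n _)).integrableOn.norm
    · exact ((FG_int ht 0 _).add (FG_int ht 0 _)).integrableOn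
    · intro r
      simp only [F_zero, one_mul]
      rw [← mul_add, norm_mul, Real.norm_eq_abs, Real.norm_eq_abs, abs_of_nonneg (add_nonneg (G_nonneg _ _ _) (G_nonneg _ _ _))]
      exact mul_le_of_le_one_left (add_nonneg (G_nonneg _ _ _) (G_nonneg _ _ _)) (F_abs _ _)

lemma Q_val {t : ℝ} (ht : 0 < t) (y : ℝ) : ∫ r in Ioc (-1 : ℝ) 1, Q t r y = 1 := by
  have := FQ_val ht 0 y
  simpa [F_zero] using this

lemma Q_int {t : ℝ} (ht : 0 < t) (y : ℝ) : IntegrableOn (fun r => Q t r y) (Ioc (-1 : ℝ) 1) := by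
  apply Integrable.of_integral_ne_zero
  rw [Q_val ht]; norm_num

lemma FQ_int {t : ℝ} (ht : 0 < t) (n : ℕ) (y : ℝ) :
    IntegrableOn (fun r => F n r * Q t r y) (Ioc (-1 : ℝ) 1) :=
  (Q_int ht y).bdd_mul (c := 1) (F_cont n).aestronglyMeasurable
    (F_abs_ae _ n)

lemma Q_joint (ν : Measure ℝ) [IsFiniteMeasure ν] (a b : ℝ → ℝ) (ha : Measurable a) (hb : Measurable b)
    (hpos : ∀ᵐ s ∂ν, 0 < a s) :
    Integrable (fun p : ℝ × ℝ => Q (a p.2) p.1 (b p.2)) ((volume.restrict (Ioc (-1 : ℝ) 1)).prod ν) := by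
  have hm : Measurable (fun p : ℝ × ℝ => Q (a p.2) p.1 (b p.2)) :=
    Q_meas.comp (f := fun p : ℝ × ℝ => (a p.2, p.1, b p.2)) (by fun_prop)
  rw [integrable_prod_iff' hm.aestronglyMeasurable]
  constructor
  · filter_upwards [hpos] with s hs using Q_int hs _
  · refine (integrable_const (1 : ℝ)).congr ?_
    filter_upwards [hpos] with s hs
    simp only [Real.norm_of_nonneg (Q_nonneg _ _ _)]
    rw [Q_val hs]

lemma exp_integral (l : ℝ) : l * ∫ s in Ioc (0 : ℝ) 1, Real.exp (-l * s) = 1 - Real.exp (-l) := by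
  rw [← intervalIntegral.integral_of_le zero_le_one, ← intervalIntegral.integral_const_mul]
  rw [intervalIntegral.integral_eq_sub_of_hasDerivAt (f := fun s => -Real.exp (-l * s))]
  · simp; ring
  · intro x _
    have := ((hasDerivAt_id x).const_mul (-l)).exp.neg
    refine this.congr_deriv ?_
    simp; ring
  · exact Continuous.intervalIntegrable (by fun_prop) _ _

lemma mode_eq (j A B : ℝ) (ρ : ℝ → ℝ) (hm : Measurable ρ)
    (h01 : ∀ r ∈ Icc (-1 : ℝ) 1, ρ r ∈ Icc (0 : ℝ) 1)
    (heq : ∀ r ∈ Icc (-1 : ℝ) 1, ρ r = (∫ y in (-1 : ℝ)..1, P 1 r y * ρ y)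
      + j / 2 * ∫ s in (0 : ℝ)..1, (P s r 1 * A - P s r (-1) * B)) (n : ℕ) :
    ∫ r in Ioc (-1 : ℝ) 1, F n r * ρ r
      = Real.exp (-(n * Real.pi / 2) ^ 2 / 2) * (∫ r in Ioc (-1 : ℝ) 1, F n r * ρ r)
        + j / 2 * ((∫ s in Ioc (0 : ℝ) 1, Real.exp (-(n * Real.pi / 2) ^ 2 / 2 * s)) * (F n 1 * A - F n (-1) * B)) := by
  set μ := volume.restrict (Ioc (-1 : ℝ) 1) with hμ
  set ν := volume.restrict (Ioc (0 : ℝ) 1) with hν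
  have hνpos : ∀ᵐ s ∂ν, 0 < s := by
    filter_upwards [ae_restrict_mem measurableSet_Ioc] with s hs using hs.1
  have H1 : Integrable (fun p : ℝ × ℝ => F n p.1 * (Q 1 p.1 p.2 * ρ p.2)) (μ.prod μ) := by
    refine Integrable.bdd_mul (c := 1) ?_ ((F_cont n).comp continuous_fst).aestronglyMeasurable
      (Filter.Eventually.of_forall fun p => F_abs n p.1)
    refine Integrable.mul_bdd (c := 1) (Q_joint μ (fun _ => 1) id measurable_const measurable_id (by simp))
      (hm.comp measurable_snd).aestronglyMeasurable ?_
    have : ∀ᵐ y ∂μ, ‖ρ y‖ ≤ 1 := by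
      filter_upwards [ae_restrict_mem measurableSet_Ioc] with y hy
      have := h01 y (Ioc_subset_Icc_self hy)
      rw [Real.norm_of_nonneg this.1]; exact this.2
    exact Measure.quasiMeasurePreserving_snd.ae this
  have H2 : Integrable (fun p : ℝ × ℝ => F n p.1 * (Q p.2 p.1 1 * A - Q p.2 p.1 (-1) * B)) (μ.prod ν) := by
    refine Integrable.bdd_mul (c := 1) ?_ ((F_cont n).comp continuous_fst).aestronglyMeasurable
      (Filter.Eventually.of_forall fun p => F_abs n p.1)
    exact ((Q_joint ν id (fun _ => 1) measurable_id measurable_const hνpos).mul_const A).sub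
      ((Q_joint ν id (fun _ => -1) measurable_id measurable_const hνpos).mul_const B)
  have E : ∀ r ∈ Ioc (-1 : ℝ) 1, F n r * ρ r = (∫ y, F n r * (Q 1 r y * ρ y) ∂μ)
      + j / 2 * ∫ s, F n r * (Q s r 1 * A - Q s r (-1) * B) ∂ν := by
    intro r hr
    conv_lhs => rw [heq r (Ioc_subset_Icc_self hr)]
    rw [integral_const_mul, integral_const_mul, intervalIntegral.integral_of_le (by norm_num),
      intervalIntegral.integral_of_le (by norm_num)]
    have e1 : ∫ y in Ioc (-1 : ℝ) 1, P 1 r y * ρ y = ∫ y, Q 1 r y * ρ y ∂μ := by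
      simp_rw [P_eq_Q one_pos]; rfl
    have e2 : ∫ s in Ioc (0 : ℝ) 1, (P s r 1 * A - P s r (-1) * B) = ∫ s, (Q s r 1 * A - Q s r (-1) * B) ∂ν := by
      refine setIntegral_congr_fun measurableSet_Ioc fun s hs => ?_
      simp only [P_eq_Q hs.1]
    rw [e1, e2]; ring
  have V1 : ∫ r, ∫ y, F n r * (Q 1 r y * ρ y) ∂μ ∂μ
      = Real.exp (-(n * Real.pi / 2) ^ 2 / 2) * ∫ r, F n r * ρ r ∂μ := by
    rw [integral_integral_swap H1, ← integral_const_mul]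
    congr 1; ext y
    simp_rw [← mul_assoc]
    rw [integral_mul_const, FQ_val one_pos, mul_one]
  have V2 : ∫ r, ∫ s, F n r * (Q s r 1 * A - Q s r (-1) * B) ∂ν ∂μ
      = (∫ s, Real.exp (-(n * Real.pi / 2) ^ 2 / 2 * s) ∂ν) * (F n 1 * A - F n (-1) * B) := by
    rw [integral_integral_swap H2, ← integral_mul_const]
    refine integral_congr_ae ?_
    filter_upwards [hνpos] with s hs
    simp_rw [mul_sub, ← mul_assoc]
    rw [integral_sub ((FQ_int hs n 1).mul_const A) ((FQ_int hs n (-1)).mul_const B),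
      integral_mul_const, integral_mul_const, FQ_val hs, FQ_val hs]
  calc ∫ r, F n r * ρ r ∂μ = ∫ r, ((∫ y, F n r * (Q 1 r y * ρ y) ∂μ)
      + j / 2 * ∫ s, F n r * (Q s r 1 * A - Q s r (-1) * B) ∂ν) ∂μ :=
        setIntegral_congr_fun measurableSet_Ioc E
    _ = _ := by
        rw [integral_add H1.integral_prod_left (H2.integral_prod_left.const_mul _), integral_const_mul, V1, V2]

lemma F_mul (n : ℕ) (r : ℝ) : F 1 r * F (n + 1) r = (F (n + 2) r + F n r) / 2 := by
  unfold F
  set x := Real.pi / 2 * (r + 1)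
  have e1 : ((1 : ℕ) : ℝ) * Real.pi / 2 * (r + 1) = x := by push_cast; ring
  have e2 : ((n + 1 : ℕ) : ℝ) * Real.pi / 2 * (r + 1) = n * x + x := by push_cast; ring
  have e3 : ((n + 2 : ℕ) : ℝ) * Real.pi / 2 * (r + 1) = n * x + x + x := by push_cast; ring
  have e4 : (n : ℝ) * Real.pi / 2 * (r + 1) = n * x + x - x := by ring
  rw [e1, e2, e3, e4, Real.cos_add (n * x + x) x, Real.cos_sub (n * x + x) x]
  ring

/-- completeness of the cosine system -/
lemma complete (u : ℝ → ℝ) (hu : ContinuousOn u (Icc (-1) 1))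
    (h : ∀ n, ∫ r in (-1 : ℝ)..1, F n r * u r = 0) : ∀ r ∈ Icc (-1 : ℝ) 1, u r = 0 := by
  have hle : (-1 : ℝ) ≤ 1 := by norm_num
  have hui : ∀ f : ℝ → ℝ, Continuous f → IntervalIntegrable (fun r => f r * u r) volume (-1) 1 := fun f hf =>
    ContinuousOn.intervalIntegrable (by rw [uIcc_of_le hle]; exact hf.continuousOn.mul hu)
  have hpow : ∀ m n : ℕ, ∫ r in (-1 : ℝ)..1, (F 1 r ^ m * F n r) * u r = 0 := by
    intro m
    induction m with
    | zero => intro n; simpa using h n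
    | succ m ih =>
      intro n
      cases n with
      | zero =>
        have := ih 1
        simpa [F_zero, pow_succ] using this
      | succ n =>
        have e : ∀ r, (F 1 r ^ (m + 1) * F (n + 1) r) * u r
            = (1 / 2) * ((F 1 r ^ m * F (n + 2) r) * u r) + (1 / 2) * ((F 1 r ^ m * F n r) * u r) := by
          intro r
          rw [pow_succ, mul_assoc (F 1 r ^ m), F_mul]; ring
        simp_rw [e]
        rw [intervalIntegral.integral_add, intervalIntegral.integral_const_mul,
          intervalIntegral.integral_const_mul, ih, ih]
        · simp
        · exact (hui _ (((F_cont 1).pow m).mul (F_cont _))).const_mul _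
        · exact (hui _ (((F_cont 1).pow m).mul (F_cont _))).const_mul _
  have hpoly : ∀ p : Polynomial ℝ, ∫ r in (-1 : ℝ)..1, p.eval (F 1 r) * u r = 0 := by
    intro p
    induction p using Polynomial.induction_on' with
    | add p q hp hq =>
      simp_rw [Polynomial.eval_add, add_mul]
      rw [intervalIntegral.integral_add, hp, hq, add_zero]
      · exact hui _ (p.continuous.comp (F_cont 1))
      · exact hui _ (q.continuous.comp (F_cont 1))
    | monomial m a =>
      simp_rw [Polynomial.eval_monomial, mul_assoc]
      rw [intervalIntegral.integral_const_mul]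
      have := hpow m 0
      simp only [F_zero, mul_one] at this
      rw [this, mul_zero]
  have hpi := Real.pi_pos
  have hg : ContinuousOn (fun y => u (2 / Real.pi * Real.arccos y - 1)) (Icc (-1) 1) := by
    refine hu.comp (Continuous.continuousOn (by fun_prop)) fun y _ => ?_
    have h1 := Real.arccos_nonneg y
    have h2 := Real.arccos_le_pi y
    constructor
    · have : 0 ≤ 2 / Real.pi * Real.arccos y := by positivity
      linarith
    · have : 2 / Real.pi * Real.arccos y ≤ 2 / Real.pi * Real.pi := by gcongr
      rw [div_mul_cancel₀ _ hpi.ne'] at this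
      linarith
  have hginv : ∀ r ∈ Icc (-1 : ℝ) 1, 2 / Real.pi * Real.arccos (F 1 r) - 1 = r := by
    intro r hr
    unfold F
    rw [Real.arccos_cos]
    · push_cast; field_simp; ring
    · have : 0 ≤ r + 1 := by linarith [hr.1]
      positivity
    · push_cast
      nlinarith [hr.2]
  obtain ⟨M, hM⟩ := isCompact_Icc.exists_bound_of_continuousOn hu
  have hM0 : 0 ≤ M := (norm_nonneg _).trans (hM 0 (by norm_num))
  have hsq_int : IntervalIntegrable (fun r => u r * u r) volume (-1) 1 :=
    ContinuousOn.intervalIntegrable (by rw [uIcc_of_le hle]; exact hu.mul hu)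
  have hsq : ∫ r in (-1 : ℝ)..1, u r * u r ≤ 0 := by
    refine le_of_forall_pos_le_add fun ε hε => ?_
    obtain ⟨p, hp⟩ := exists_polynomial_near_of_continuousOn (-1) 1 _ hg (ε / (2 * (M + 1))) (by positivity)
    have hb : ‖∫ r in (-1 : ℝ)..1, (u r * u r - p.eval (F 1 r) * u r)‖ ≤ ε / (2 * (M + 1)) * M * |1 - (-1)| := by
      refine intervalIntegral.norm_integral_le_of_norm_le_const fun r hr => ?_
      rw [uIoc_of_le hle] at hr
      have hr' := Ioc_subset_Icc_self hr
      have h1 := hp (F 1 r) (abs_le.mp (F_abs 1 r))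
      rw [hginv r hr', abs_sub_comm] at h1
      rw [← sub_mul, norm_mul]
      exact mul_le_mul h1.le (hM r hr') (norm_nonneg _) (by positivity)
    rw [intervalIntegral.integral_sub hsq_int (hui (fun r => p.eval (F 1 r)) (p.continuous.comp (F_cont 1))), hpoly, sub_zero] at hb
    have h3 : ε / (2 * (M + 1)) * M * |1 - (-1 : ℝ)| ≤ ε := by
      rw [show |1 - (-1 : ℝ)| = 2 by norm_num]
      have : ε / (2 * (M + 1)) * M * 2 = ε * (M / (M + 1)) := by field_simp
      rw [this]
      exact mul_le_of_le_one_right hε.le ((div_le_one (by positivity)).mpr (by linarith))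
    have := (le_abs_self _).trans (hb.trans h3)
    linarith
  intro r hr
  by_contra hne
  have := intervalIntegral.integral_pos (f := fun r => u r * u r) (a := -1) (b := 1) (by norm_num) (hu.mul hu)
    (fun x _ => mul_self_nonneg _) ⟨r, hr, mul_self_pos.mpr hne⟩
  linarith

lemma F_lin (n : ℕ) (hn : n ≠ 0) : (n * Real.pi / 2) ^ 2 * ∫ r in (-1 : ℝ)..1, F n r * r = F n 1 - F n (-1) := by
  have hs : Real.sin (n * Real.pi / 2 * (1 + 1)) = 0 := by
    rw [show (n * Real.pi / 2 * (1 + 1)) = n * Real.pi by ring, Real.sin_nat_mul_pi]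
  rw [← intervalIntegral.integral_const_mul]
  rw [intervalIntegral.integral_eq_sub_of_hasDerivAt
    (f := fun r => r * ((n * Real.pi / 2) * Real.sin (n * Real.pi / 2 * (r + 1))) + Real.cos (n * Real.pi / 2 * (r + 1)))]
  · rw [hs]; unfold F; simp
  · intro r _
    have h0 : HasDerivAt (fun r : ℝ => n * Real.pi / 2 * (r + 1)) (n * Real.pi / 2 * 1) r :=
      ((hasDerivAt_id r).add_const 1).const_mul _
    have := ((hasDerivAt_id r).mul (h0.sin.const_mul (n * Real.pi / 2))).add h0.cos
    refine this.congr_deriv ?_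
    unfold F; simp; ring
  · exact Continuous.intervalIntegrable (by unfold F; fun_prop) _ _

lemma F_const (n : ℕ) (hn : n ≠ 0) : ∫ r in (-1 : ℝ)..1, F n r = 0 := by
  have hk : (n * Real.pi / 2 : ℝ) ≠ 0 := by positivity
  have hs : Real.sin (n * Real.pi / 2 * (1 + 1)) = 0 := by
    rw [show (n * Real.pi / 2 * (1 + 1)) = n * Real.pi by ring, Real.sin_nat_mul_pi]
  rw [intervalIntegral.integral_eq_sub_of_hasDerivAt
    (f := fun r => Real.sin (n * Real.pi / 2 * (r + 1)) / (n * Real.pi / 2))]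
  · rw [hs]; simp
  · intro r _
    have h0 : HasDerivAt (fun r : ℝ => n * Real.pi / 2 * (r + 1)) (n * Real.pi / 2 * 1) r :=
      ((hasDerivAt_id r).add_const 1).const_mul _
    refine (h0.sin.div_const (n * Real.pi / 2)).congr_deriv ?_
    unfold F; field_simp
  · exact (F_cont n).intervalIntegrable _ _

/-- Uniqueness of the stationary solution: if `ρ̂ : [−1,1] → [0,1]` is continuous
and the time-independent function `(r,t) ↦ ρ̂(r)` solves the macroscopic integral
equation with initial datum `ρ̂`, then `ρ̂(r) = j·(1−α^K)·r + 1/2`, where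
`α ∈ (1/2,1)` is the unique solution of `α + j·α^K = j + 1/2`. -/
theorem stationary_solution_unique (j : ℝ) (hj : 0 < j) (K : ℕ) (hK : 1 ≤ K)
    (α : ℝ) (hα : α ∈ Set.Ioo (1 / 2 : ℝ) 1) (hαeq : α + j * α ^ K = j + 1 / 2)
    (ρhat : ℝ → ℝ) (hc : ContinuousOn ρhat (Set.Icc (-1 : ℝ) 1))
    (h01 : ∀ r ∈ Set.Icc (-1 : ℝ) 1, ρhat r ∈ Set.Icc (0 : ℝ) 1)
    (hsol : IsMacroSolution j K ρhat (fun r _ => ρhat r)) :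
    ∀ r ∈ Set.Icc (-1 : ℝ) 1, ρhat r = j * (1 - α ^ K) * r + 1 / 2 := by
  obtain ⟨hm, -, -, heq⟩ := hsol
  have hm' : Measurable ρhat := hm.comp (measurable_id.prodMk (measurable_const (a := (0 : ℝ))))
  set a := ρhat 1 with ha
  set b := ρhat (-1) with hb
  have ha01 : a ∈ Icc (0 : ℝ) 1 := h01 1 (by norm_num)
  have hb01 : b ∈ Icc (0 : ℝ) 1 := h01 (-1) (by norm_num)
  have hmode := mode_eq j (1 - a ^ K) (1 - (1 - b) ^ K) ρhat hm' h01 (heq 1 one_pos)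
  simp only [← intervalIntegral.integral_of_le (show (-1 : ℝ) ≤ 1 by norm_num)] at hmode
  have hAB : a ^ K = (1 - b) ^ K := by
    have h0 := hmode 0
    simp only [F_zero] at h0
    norm_num at h0
    rcases h0 with h0 | h0
    · exact absurd h0 hj.ne'
    · linarith
  have hab : a = 1 - b :=
    (pow_left_inj₀ ha01.1 (by linarith [hb01.2]) (by omega)).mp hAB
  rw [← hAB] at hmode
  set A := 1 - a ^ K with hA
  set c := (∫ r in (-1 : ℝ)..1, ρhat r) / 2 with hcdef
  have hle : (-1 : ℝ) ≤ 1 := by norm_num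
  have hlin : ∀ r ∈ Icc (-1 : ℝ) 1, ρhat r - (j * A * r + c) = 0 := by
    refine complete _ (hc.sub (Continuous.continuousOn (by fun_prop))) fun n => ?_
    have i1 : IntervalIntegrable (fun r => F n r * ρhat r) volume (-1) 1 :=
      ContinuousOn.intervalIntegrable (by rw [uIcc_of_le hle]; exact (F_cont n).continuousOn.mul hc)
    have i2 : IntervalIntegrable (fun r => j * A * (F n r * r)) volume (-1) 1 :=
      Continuous.intervalIntegrable (by have := F_cont n; fun_prop) _ _
    have i3 : IntervalIntegrable (fun r => F n r * c) volume (-1) 1 :=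
      Continuous.intervalIntegrable (by have := F_cont n; fun_prop) _ _
    have e : ∀ r, F n r * (ρhat r - (j * A * r + c)) = F n r * ρhat r - (j * A * (F n r * r) + F n r * c) := by
      intro r; ring
    simp_rw [e]
    rw [intervalIntegral.integral_sub i1 (i2.add i3), intervalIntegral.integral_add i2 i3,
      intervalIntegral.integral_const_mul, intervalIntegral.integral_mul_const]
    rcases Nat.eq_zero_or_pos n with rfl | hn
    · simp only [F_zero, one_mul]
      rw [integral_id, intervalIntegral.integral_const, hcdef]
      norm_num
      ring
    · have hn0 := hn.ne'
      rw [F_const n hn0]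
      have hl := F_lin n hn0
      have hmd := hmode n
      have hx := exp_integral ((n * Real.pi / 2) ^ 2 / 2)
      simp only [← neg_div] at hx
      have hkpos : 0 < (n * Real.pi / 2) ^ 2 / 2 := by
        have : (0 : ℝ) < n := by exact_mod_cast hn
        positivity
      have hexp : Real.exp (-(n * Real.pi / 2) ^ 2 / 2) < 1 := by
        rw [Real.exp_lt_one_iff, neg_div]; linarith
      set C := ∫ r in (-1 : ℝ)..1, F n r * ρhat r
      set L := ∫ r in (-1 : ℝ)..1, F n r * r
      set X := Real.exp (-(n * Real.pi / 2) ^ 2 / 2)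
      set I := ∫ s in Ioc (0 : ℝ) 1, Real.exp (-(n * Real.pi / 2) ^ 2 / 2 * s)
      set k := (n * Real.pi / 2) ^ 2
      have h1 : (1 - X) * (k / 2 * (C - j * A * L)) = 0 := by
        linear_combination (k / 2) * hmd - (1 - X) * j * A / 2 * hl
          + j / 2 * A * (F n 1 - F n (-1)) * hx
      rcases mul_eq_zero.mp h1 with h2 | h2
      · linarith
      · rcases mul_eq_zero.mp h2 with h3 | h3
        · linarith
        · linarith
  have h1 := hlin 1 (by norm_num)
  have h2 := hlin (-1) (by norm_num)
  have hchalf : c = 1 / 2 := by linarith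
  have haeq : a + j * a ^ K = j + 1 / 2 := by
    rw [← ha] at h1
    rw [hA, hchalf] at h1
    linarith
  have haα : a = α := by
    rcases lt_trichotomy a α with h | h | h
    · have := pow_le_pow_left₀ ha01.1 h.le K
      nlinarith
    · exact h
    · have := pow_le_pow_left₀ (by linarith [hα.1] : (0 : ℝ) ≤ α) h.le K
      nlinarith
  intro r hr
  have := hlin r hr
  rw [hA, haα, hchalf] at this
  linarith
end
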